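/- Case A, all powers: Let l be a prime with l ≡ 3 (mod 4) and l ≥ 7, let r ≥ 1, let N = l^r, and assume f = φ(N)/2. Set h = h(Q(√-l)). Then there exist integers a, b with 4p^h = a² + l b² and a ≡ -2 p^{(l-1+2h)/4} (mod l) such that for every integer t with 0 ≤ t < r, G(χ^{l^t}) = p^{(f - h l^t)/2} · ((a + b √-l)/2)^{l^t}. -/

import Mathlib

open Complex Polynomial IntermediateField

/-- The complex primitive `p`-th root of unity `exp(2πi/p)`. -/
noncomputable def zetaP (p : ℕ) : ℂ := Complex.exp (2 * Real.pi * Complex.I / p)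

/-- The Gauss sum `G(χ^λ) = ∑_{x ∈ F, x ≠ 0} χ^λ(x) ζ_p^{T(x)}`, where
`T` is the trace map from `F` down to `ZMod p`. -/
noncomputable def gaussSumN (p : ℕ) {F : Type} [Field F] [Fintype F] [Algebra (ZMod p) F]
    (χ : MulChar F ℂ) (lam : ℕ) : ℂ :=
  letI : DecidableEq F := Classical.decEq F
  ∑ x ∈ Finset.univ.filter (fun x : F => x ≠ 0),
    (χ ^ lam) x * zetaP p ^ (Algebra.trace (ZMod p) F x).val

/-- `√-m = i√m ∈ ℂ`. -/
noncomputable def sqrtNeg (m : ℕ) : ℂ := Real.sqrt m * Complex.I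

theorem sqrtNeg_sq (m : ℕ) : sqrtNeg m ^ 2 = -(m : ℂ) := by
  have h : ((Real.sqrt m : ℝ) : ℂ) ^ 2 = ((m : ℝ) : ℂ) := by
    rw [← Complex.ofReal_pow, Real.sq_sqrt (by positivity)]
  simp only [sqrtNeg, mul_pow, Complex.I_sq, h]
  push_cast
  ring

theorem isIntegral_sqrtNeg (m : ℕ) : IsIntegral ℚ (sqrtNeg m) := by
  refine ⟨X ^ 2 + C (m : ℚ), monic_X_pow_add_C _ (by norm_num), ?_⟩
  simp [sqrtNeg_sq]

/-- The class number `h(ℚ(√-m))` of the quadratic field `ℚ(√-m) ⊆ ℂ`. -/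
noncomputable def classNumSqrtNeg (m : ℕ) : ℕ :=
  haveI : FiniteDimensional ℚ ℚ⟮sqrtNeg m⟯ :=
    IntermediateField.adjoin.finiteDimensional (isIntegral_sqrtNeg m)
  haveI : CharZero ℚ⟮sqrtNeg m⟯ :=
    charZero_of_injective_algebraMap (algebraMap ℚ ℚ⟮sqrtNeg m⟯).injective
  haveI : NumberField ℚ⟮sqrtNeg m⟯ := ⟨⟩
  NumberField.classNumber ℚ⟮sqrtNeg m⟯

/-- `√p* = √p` if `p ≡ 1 (mod 4)` and `i√p` if `p ≡ 3 (mod 4)`. -/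
noncomputable def sqrtPStar (p : ℕ) : ℂ :=
  if p % 4 = 1 then (Real.sqrt p : ℂ) else (Real.sqrt p : ℂ) * Complex.I

open Complex Polynomial IntermediateField

namespace G16
open Filter Topology

lemma rpow_diff_bound (m x y s : ℝ) (hm : 0 < m) (hx : m ≤ x) (hy : m ≤ y) (hs : 0 < s) :
    |x ^ (-s) - y ^ (-s)| ≤ s * m ^ (-s - 1) * |x - y| := by
  have := Convex.norm_image_sub_le_of_norm_hasDerivWithin_le (f := fun z : ℝ => z ^ (-s))
    (f' := fun z => (-s) * z ^ (-s - 1)) (s := Set.Ici m) (C := s * m ^ (-s - 1))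
    (x := y) (y := x) ?_ ?_ (convex_Ici m) hy hx
  · simpa using this
  · intro z hz
    have hz0 : 0 < z := lt_of_lt_of_le hm hz
    have := (Real.hasDerivAt_rpow_const (x := z) (p := -s) (Or.inl hz0.ne')).hasDerivWithinAt
      (s := Set.Ici m)
    simpa using this
  · intro z hz
    have hz0 : 0 < z := lt_of_lt_of_le hm hz
    rw [norm_mul, Real.norm_eq_abs, Real.norm_eq_abs, abs_neg, abs_of_pos hs,
      abs_of_pos (Real.rpow_pos_of_pos hz0 _)]
    exact mul_le_mul_of_nonneg_left (Real.rpow_le_rpow_of_nonpos hm hz (by linarith)) hs.le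

lemma hurwitzOdd_one (a : ℝ) (h0 : 0 < a) (h1 : a < 1) :
    HurwitzZeta.hurwitzZetaOdd (a : UnitAddCircle) 1 = Real.pi / 2 * Complex.cot (Real.pi * a) := by
  set d := min a (1 - a) with hd
  have hd0 : 0 < d := lt_min h0 (by linarith)
  have hd1 : d < 1 := lt_of_le_of_lt (min_le_left _ _) h1
  set g : ℝ → ℕ → ℝ := fun s n => ((n + a) ^ (-s) - (n + 1 - a) ^ (-s)) / 2 with hg
  set bd : ℕ → ℝ := fun n => d⁻¹ * ((n : ℝ) + d) ^ (-2 : ℝ) with hbd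
  have hbds : Summable bd := by
    apply Summable.mul_left
    have := (Real.summable_one_div_nat_add_rpow d 2).2 (by norm_num)
    refine this.congr fun n => ?_
    rw [abs_of_pos (by positivity), Real.rpow_neg (by positivity)]
    simp
  have hbound : ∀ s : ℝ, 1 ≤ s → s ≤ 2 → ∀ n, ‖g s n‖ ≤ bd n := by
    intro s hs1 hs2 n
    have hn : (0 : ℝ) ≤ n := Nat.cast_nonneg n
    have hm0 : (0 : ℝ) < n + d := by positivity
    have := rpow_diff_bound (n + d) (n + a) (n + 1 - a) s hm0
      (by have := min_le_left a (1 - a); linarith) (by have := min_le_right a (1 - a); linarith)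
      (by linarith)
    have hxy : |((n : ℝ) + a) - (n + 1 - a)| ≤ 1 := by
      rw [abs_le]; constructor <;> linarith
    have hp : ((n : ℝ) + d) ^ (-s - 1) ≤ d⁻¹ * ((n : ℝ) + d) ^ (-2 : ℝ) := by
      have : (-s - 1 : ℝ) = (1 - s) + (-2) := by ring
      rw [this, Real.rpow_add hm0]
      gcongr
      calc ((n : ℝ) + d) ^ (1 - s) ≤ d ^ (1 - s) :=
            Real.rpow_le_rpow_of_nonpos hd0 (by linarith) (by linarith)
        _ ≤ d ^ (-1 : ℝ) := Real.rpow_le_rpow_of_exponent_ge hd0 hd1.le (by linarith)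
        _ = d⁻¹ := Real.rpow_neg_one d
    rw [hg]; simp only
    rw [norm_div, Real.norm_eq_abs, Real.norm_ofNat, div_le_iff₀ (by norm_num)]
    have hP : 0 < ((n : ℝ) + d) ^ (-s - 1) := Real.rpow_pos_of_pos hm0 _
    calc _ ≤ s * ((n : ℝ) + d) ^ (-s - 1) * |((n : ℝ) + a) - (n + 1 - a)| := this
      _ ≤ s * ((n : ℝ) + d) ^ (-s - 1) * 1 := by gcongr
      _ ≤ bd n * 2 := by rw [hbd]; simp only; nlinarith
  have hA : Tendsto (fun s : ℝ => ∑' n, g s n) (𝓝[>] 1) (𝓝 (∑' n, g 1 n)) := by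
    apply tendsto_tsum_of_dominated_convergence hbds
    · intro n
      have hn : (0 : ℝ) ≤ n := Nat.cast_nonneg n
      have : ContinuousAt (fun s : ℝ => g s n) 1 := by
        have e1 : (n : ℝ) + a ≠ 0 := by positivity
        have e2 : (n : ℝ) + 1 - a ≠ 0 := by linarith
        rw [hg]; simp only
        refine ContinuousAt.div_const (ContinuousAt.sub ?_ ?_) _
        · exact (Real.continuousAt_const_rpow e1).comp continuousAt_neg
        · exact (Real.continuousAt_const_rpow e2).comp continuousAt_neg
      exact this.tendsto.mono_left nhdsWithin_le_nhds
    · have : Set.Ioo (1:ℝ) 2 ∈ 𝓝[>] (1:ℝ) := Ioo_mem_nhdsGT (by norm_num)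
      filter_upwards [this] with s hs n
      exact hbound s hs.1.le hs.2.le n
  have hB : Tendsto (fun s : ℝ => HurwitzZeta.hurwitzZetaOdd (a : UnitAddCircle) s) (𝓝[>] 1)
      (𝓝 (HurwitzZeta.hurwitzZetaOdd (a : UnitAddCircle) 1)) := by
    have c := (HurwitzZeta.differentiable_hurwitzZetaOdd (a : UnitAddCircle)).continuous
    have c2 : Continuous (fun s : ℝ => HurwitzZeta.hurwitzZetaOdd (a : UnitAddCircle) s) :=
      c.comp continuous_ofReal
    have := c2.tendsto 1
    simp only [ofReal_one] at this
    exact this.mono_left nhdsWithin_le_nhds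
  have hC : ∀ s : ℝ, 1 < s → HurwitzZeta.hurwitzZetaOdd (a : UnitAddCircle) s
      = ((∑' n, g s n : ℝ) : ℂ) := by
    intro s hs
    have := HurwitzZeta.hasSum_nat_hurwitzZetaOdd_of_mem_Icc (a := a) ⟨h0.le, h1.le⟩
      (s := s) (by simpa using hs)
    rw [← this.tsum_eq, ofReal_tsum]
    refine tsum_congr fun n => ?_
    have hn : (0 : ℝ) ≤ n := Nat.cast_nonneg n
    rw [hg]
    push_cast
    rw [ofReal_cpow (by linarith), ofReal_cpow (by linarith)]
    push_cast
    rw [Complex.cpow_neg, Complex.cpow_neg]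
    simp
  have hD : HurwitzZeta.hurwitzZetaOdd (a : UnitAddCircle) 1 = ((∑' n, g 1 n : ℝ) : ℂ) := by
    refine tendsto_nhds_unique hB ?_
    have : Tendsto (fun s : ℝ => ((∑' n, g s n : ℝ) : ℂ)) (𝓝[>] 1) (𝓝 ((∑' n, g 1 n : ℝ) : ℂ)) :=
      (continuous_ofReal.tendsto _).comp hA
    refine this.congr' ?_
    filter_upwards [self_mem_nhdsWithin] with s hs
    exact (hC s hs).symm
  rw [hD]
  have hs1 : Summable (g 1) := Summable.of_norm_bounded hbds (hbound 1 le_rfl (by norm_num))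
  have ht1 : Tendsto (fun M : ℕ => ((∑ n ∈ Finset.range M, g 1 n : ℝ) : ℂ)) atTop
     (𝓝 ((∑' n, g 1 n : ℝ) : ℂ)) :=
    (continuous_ofReal.tendsto _).comp hs1.hasSum.tendsto_sum_nat
  refine tendsto_nhds_unique ht1 ?_
  have ha : (a : ℂ) ∈ Complex.integerComplement := by
    rw [Complex.mem_integerComplement_iff]
    rintro ⟨n, hn⟩
    have : (n : ℝ) = a := by exact_mod_cast hn
    have l0 : (0 : ℝ) < n := by linarith
    have l1 : (n : ℝ) < 1 := by linarith
    have l0' : 0 < n := by exact_mod_cast l0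
    have l1' : n < 1 := by exact_mod_cast l1
    omega
  have hcot := tendsto_logDeriv_euler_cot_sub ha
  have hz : Tendsto (fun M : ℕ => (1 : ℂ) / (a + M)) atTop (𝓝 0) := by
    have : Tendsto (fun M : ℕ => (1:ℝ) / (a + M)) atTop (𝓝 0) := by
      apply Tendsto.const_div_atTop
      exact tendsto_atTop_add_const_left _ _ tendsto_natCast_atTop_atTop
    have := (continuous_ofReal.tendsto _).comp this
    simpa [Function.comp_def] using this
  have hfin : Tendsto (fun M : ℕ => (1 / (a : ℂ) + ∑ j ∈ Finset.range M, cotTerm (a : ℂ) j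
      - 1 / (a + M)) / 2) atTop (𝓝 (Real.pi / 2 * Complex.cot (Real.pi * a))) := by
    have := ((hcot.const_add (1 / (a : ℂ))).sub hz).div_const 2
    convert this using 2
    ring
  refine hfin.congr fun M => ?_
  induction M with
  | zero => simp
  | succ M ih =>
    rw [Finset.sum_range_succ, Finset.sum_range_succ, ofReal_add, ← ih]
    have hn : (0 : ℝ) ≤ M := Nat.cast_nonneg M
    have e1 : (a : ℂ) + M ≠ 0 := by
      have : a + M ≠ 0 := by positivity
      exact_mod_cast this
    have e3 : (a : ℂ) + (M + 1) ≠ 0 := by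
      have : a + (M + 1) ≠ 0 := by positivity
      exact_mod_cast this
    have e2 : (M : ℂ) + 1 - a ≠ 0 := by
      have : (M : ℝ) + 1 - a ≠ 0 := by linarith
      exact_mod_cast this
    have e4 : (a : ℂ) - (M + 1) ≠ 0 := by
      intro h; apply e2; linear_combination -h
    have e5 : (M:ℂ) + a ≠ 0 := by rwa [add_comm]
    have : ((g 1 M : ℝ) : ℂ) = (1 / ((M : ℂ) + a) - 1 / (M + 1 - a)) / 2 := by
      rw [hg]; simp only [Real.rpow_neg_one]
      push_cast
      simp
    rw [this, cotTerm]
    push_cast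
    have e6 : (1 : ℂ) / (a - (M + 1)) = - (1 / (M + 1 - a)) := by
      rw [← one_div_neg_eq_neg_one_div]; congr 1; ring
    rw [e6, add_comm (M : ℂ) (a : ℂ)]
    ring

end G16

open Complex Polynomial IntermediateField

namespace G16
open Filter Topology

noncomputable def qc (l : ℕ) [Fact l.Prime] : MulChar (ZMod l) ℂ :=
  (quadraticChar (ZMod l)).ringHomComp (Int.castRingHom ℂ)

lemma qc_apply (l : ℕ) [Fact l.Prime] (j : ZMod l) : qc l j = ((quadraticChar (ZMod l) j : ℤ) : ℂ) := rfl

/-- the sum `Σ j (j/l)` -/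
noncomputable def sumS (l : ℕ) [Fact l.Prime] : ℤ :=
  ∑ j : ZMod l, (j.val : ℤ) * quadraticChar (ZMod l) j

lemma qc_ne_one (l : ℕ) [Fact l.Prime] (h2 : l ≠ 2) : qc l ≠ 1 := by
  rw [qc, MulChar.ringHomComp_ne_one_iff (RingHom.injective_int _)]
  exact quadraticChar_ne_one (by rwa [ZMod.ringChar_zmod_n])

lemma qc_quad (l : ℕ) [Fact l.Prime] : (qc l).IsQuadratic :=
  (quadraticChar_isQuadratic (ZMod l)).comp _

lemma quad_neg_one (l : ℕ) [Fact l.Prime] (h4 : l % 4 = 3) : quadraticChar (ZMod l) (-1) = -1 := by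
  rw [quadraticChar_neg_one_iff_not_isSquare, ZMod.exists_sq_eq_neg_one_iff]
  simpa using h4

lemma qc_neg_one (l : ℕ) [Fact l.Prime] (h4 : l % 4 = 3) : qc l (-1) = -1 := by
  rw [qc_apply, quad_neg_one l h4]; simp

lemma tau_sq (l : ℕ) [Fact l.Prime] (h4 : l % 4 = 3) :
    gaussSum (qc l) (ZMod.stdAddChar) ^ 2 = -(l : ℂ) := by
  rw [gaussSum_sq (qc_ne_one l (by omega)) (qc_quad l) (ZMod.isPrimitive_stdAddChar l),
    qc_neg_one l h4, ZMod.card]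
  ring

lemma sum_geom_weighted (x : ℂ) (n : ℕ) :
    (x - 1) * ∑ k ∈ Finset.range n, (k : ℂ) * x ^ k = n * x ^ n - x * ∑ k ∈ Finset.range n, x ^ k := by
  induction n with
  | zero => simp
  | succ n ih =>
    rw [Finset.sum_range_succ, Finset.sum_range_succ, mul_add, ih]
    push_cast; ring

lemma sum_zmod_range (l : ℕ) [NeZero l] (g : ℕ → ℂ) :
    ∑ k : ZMod l, g k.val = ∑ k ∈ Finset.range l, g k := by
  obtain ⟨m, rfl⟩ := Nat.exists_eq_succ_of_ne_zero (NeZero.ne l)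
  rw [Finset.sum_range]
  rfl

lemma sum_val_std (l : ℕ) [Fact l.Prime] (j : ZMod l) (hj : j ≠ 0) :
    (ZMod.stdAddChar j - 1) * ∑ k : ZMod l, (k.val : ℂ) * ZMod.stdAddChar (j * k) = l := by
  have e : ∀ k : ZMod l, (ZMod.stdAddChar (j * k) : ℂ) = (ZMod.stdAddChar j : ℂ) ^ k.val := by
    intro k
    rw [← AddChar.map_nsmul_eq_pow]
    congr 1
    rw [nsmul_eq_mul, ZMod.natCast_zmod_val, mul_comm]
  simp_rw [e]
  rw [sum_zmod_range l (fun k => (k : ℂ) * (ZMod.stdAddChar j : ℂ) ^ k), sum_geom_weighted]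
  have h1 : (ZMod.stdAddChar j : ℂ) ^ l = 1 := by
    rw [← AddChar.map_nsmul_eq_pow]; simp
  have hne : (ZMod.stdAddChar j : ℂ) ≠ 1 := by
    intro h
    apply hj
    apply ZMod.injective_stdAddChar
    rw [h]; simp
  have h2 : ∑ k ∈ Finset.range l, (ZMod.stdAddChar j : ℂ) ^ k = 0 := by
    have := mul_geom_sum (ZMod.stdAddChar j : ℂ) l
    rw [h1, sub_self] at this
    exact (mul_eq_zero.1 this).resolve_left (sub_ne_zero.2 hne)
  rw [h1, h2]; ring

lemma gauss_shift (l : ℕ) [Fact l.Prime] (k : ZMod l) (hk : k ≠ 0) :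
    ∑ j : ZMod l, qc l j * ZMod.stdAddChar (j * k) = qc l k * gaussSum (qc l) ZMod.stdAddChar := by
  have := gaussSum_mulShift_eq (qc l) ZMod.stdAddChar (Units.mk0 k hk)
  rw [(qc_quad l).inv] at this
  rw [Units.val_mk0] at this
  rw [← this, gaussSum]
  refine Finset.sum_congr rfl fun j _ => ?_
  rw [AddChar.mulShift_apply, mul_comm k j]

lemma cot_val (l : ℕ) [Fact l.Prime] (j : ZMod l) (hj : j ≠ 0) :
    Complex.cot (Real.pi * ((j.val / l : ℝ) : ℂ)) =
      I * (1 + 2 / l * ∑ k : ZMod l, (k.val : ℂ) * ZMod.stdAddChar (j * k)) := by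
  have hl0 : (l : ℂ) ≠ 0 := by exact_mod_cast (Fact.out : l.Prime).ne_zero
  have hne : (ZMod.stdAddChar j : ℂ) ≠ 1 := by
    intro h
    apply hj
    apply ZMod.injective_stdAddChar
    rw [h]; simp
  have hs := sum_val_std l j hj
  have hE : Complex.exp (2 * I * (Real.pi * ((j.val / l : ℝ) : ℂ))) = ZMod.stdAddChar j := by
    have := ZMod.stdAddChar_coe (N := l) (j.val : ℤ)
    simp only [Int.cast_natCast, ZMod.natCast_zmod_val] at this
    rw [this]; congr 1; push_cast; ring
  rw [Complex.cot_eq_exp_ratio, hE]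
  set E : ℂ := ZMod.stdAddChar j
  have h1 : (1 : ℂ) - E ≠ 0 := sub_ne_zero.2 hne.symm
  have h2 : E - 1 ≠ 0 := sub_ne_zero.2 hne
  rw [show ∑ k : ZMod l, (k.val : ℂ) * ZMod.stdAddChar (j * k) = l / (E - 1) by
    rw [eq_div_iff h2, mul_comm]; exact hs]
  rw [div_eq_iff (mul_ne_zero I_ne_zero h1)]
  field_simp
  ring_nf
  simp only [I_sq]
  ring

lemma LFun_one (l : ℕ) [Fact l.Prime] (h4 : l % 4 = 3) :
    DirichletCharacter.LFunction (qc l) 1 =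
      Real.pi * I / l ^ 2 * gaussSum (qc l) ZMod.stdAddChar * sumS l := by
  have hl0 : (l : ℂ) ≠ 0 := by exact_mod_cast (Fact.out : l.Prime).ne_zero
  have hodd : (fun j => qc l j : ZMod l → ℂ).Odd := by
    intro j
    show qc l (-j) = - qc l j
    rw [← neg_one_mul, map_mul, qc_neg_one l h4]; ring
  have : DirichletCharacter.LFunction (qc l) 1 = ZMod.LFunction (fun j => qc l j) 1 := rfl
  rw [this, ZMod.LFunction_def_odd hodd]
  have e1 : ∀ j : ZMod l, qc l j * HurwitzZeta.hurwitzZetaOdd (ZMod.toAddCircle j) 1 =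
      Real.pi / 2 * I * qc l j + Real.pi * I / l * ∑ k : ZMod l, (k.val : ℂ) * (qc l j * ZMod.stdAddChar (j * k)) := by
    intro j
    by_cases hj : j = 0
    · subst hj
      have h0 : qc l 0 = 0 := MulChar.map_zero _
      simp [h0]
    · have hlp : (0 : ℝ) < l := by exact_mod_cast (Fact.out : l.Prime).pos
      have hv : 0 < j.val := Nat.pos_of_ne_zero (by rwa [Ne, ZMod.val_eq_zero])
      have hv' : j.val < l := ZMod.val_lt j
      rw [ZMod.toAddCircle_apply, hurwitzOdd_one _ (by positivity)
        (by rw [div_lt_one hlp]; exact_mod_cast hv'), cot_val l j hj]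
      simp_rw [mul_left_comm _ (qc l j)]
      rw [← Finset.mul_sum]
      ring
  rw [Finset.sum_congr rfl fun j _ => e1 j, Finset.sum_add_distrib, ← Finset.mul_sum, ← Finset.mul_sum,
    MulChar.sum_eq_zero_of_ne_one (qc_ne_one l (by omega)), Finset.sum_comm]
  have e2 : ∀ k : ZMod l, ∑ j : ZMod l, (k.val : ℂ) * (qc l j * ZMod.stdAddChar (j * k)) =
      gaussSum (qc l) ZMod.stdAddChar * (k.val * qc l k) := by
    intro k
    by_cases hk : k = 0
    · subst hk; simp
    · rw [← Finset.mul_sum, gauss_shift l k hk]; ring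
  rw [Finset.sum_congr rfl fun k _ => e2 k, ← Finset.mul_sum, sumS]
  push_cast
  rw [Complex.cpow_neg_one]
  simp_rw [qc_apply]
  field_simp
  ring

lemma norm_LFun_one (l : ℕ) [Fact l.Prime] (h4 : l % 4 = 3) :
    ‖DirichletCharacter.LFunction (qc l) 1‖ = Real.pi / (l * Real.sqrt l) * |sumS l| := by
  have hlp : (0 : ℝ) < l := by exact_mod_cast (Fact.out : l.Prime).pos
  have hG : ‖gaussSum (qc l) ZMod.stdAddChar‖ = Real.sqrt l := by
    rw [eq_comm, Real.sqrt_eq_iff_mul_self_eq hlp.le (norm_nonneg _), ← norm_mul, ← pow_two, tau_sq l h4]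
    simp
  rw [LFun_one l h4]
  rw [norm_mul, norm_mul, hG, norm_div, norm_mul]
  have hs : Real.sqrt l * Real.sqrt l = l := Real.mul_self_sqrt hlp.le
  have hs0 : 0 < Real.sqrt l := Real.sqrt_pos.2 hlp
  simp only [norm_real, norm_I, norm_pow, norm_natCast, norm_intCast, Real.norm_eq_abs,
    abs_of_pos Real.pi_pos, Int.cast_abs]
  field_simp
  rw [pow_two, hs]
end G16

open Complex Polynomial IntermediateField
namespace G16
set_option linter.unusedSectionVars false
section idc
variable {R : Type*} [CommRing R] [IsDedekindDomain R] [Module.Free ℤ R] [Module.Finite ℤ R] [CharZero R]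

noncomputable def icount (R : Type*) [CommRing R] [IsDedekindDomain R] [Module.Free ℤ R] (n : ℕ) : ℕ :=
  Nat.card {I : Ideal R // Ideal.absNorm I = n}

lemma natcop_sup {m n : ℕ} (h : m.Coprime n) : Ideal.span {(m : R)} ⊔ Ideal.span {(n : R)} = ⊤ := by
  rw [← Ideal.isCoprime_iff_sup_eq, Ideal.isCoprime_span_singleton_iff]
  exact Nat.Coprime.cast h

lemma icount_mul {m n : ℕ} (hm : m ≠ 0) (hn : n ≠ 0) (h : m.Coprime n) (hrk : Module.finrank ℤ R = 2) :
    icount R (m * n) = icount R m * icount R n := by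
  unfold icount
  rw [← Nat.card_prod]
  symm
  refine Nat.card_congr (Equiv.ofBijective
    (fun x => ⟨x.1.1 * x.2.1, by rw [map_mul, x.1.2, x.2.2]⟩) ⟨?_, ?_⟩)
  · have key : ∀ {m n : ℕ}, m.Coprime n → ∀ A B : Ideal R, Ideal.absNorm A = m → Ideal.absNorm B = n →
        A * B ⊔ Ideal.span {(m : R)} = A := by
      intro m n h A B hA hB
      have hmA : Ideal.span {(m : R)} ≤ A := hA ▸ Ideal.span_singleton_absNorm_le A
      have hnB : Ideal.span {(n : R)} ≤ B := hB ▸ Ideal.span_singleton_absNorm_le B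
      apply le_antisymm
      · exact sup_le Ideal.mul_le_left hmA
      · have : B ⊔ Ideal.span {(m : R)} = ⊤ := by
          rw [eq_top_iff, ← natcop_sup (R := R) h, sup_comm]
          exact sup_le_sup_right hnB _
        calc A = A * (B ⊔ Ideal.span {(m : R)}) := by rw [this, Ideal.mul_top]
          _ = A * B ⊔ A * Ideal.span {(m : R)} := Ideal.mul_sup _ _ _
          _ ≤ _ := sup_le_sup_left Ideal.mul_le_right _
    rintro ⟨⟨A, hA⟩, ⟨B, hB⟩⟩ ⟨⟨A', hA'⟩, ⟨B', hB'⟩⟩ he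
    simp only [Subtype.mk.injEq] at he
    have h1 := key h A B hA hB
    have h2 := key h.symm B A hB hA
    rw [he, key h A' B' hA' hB'] at h1
    rw [mul_comm, he, mul_comm, key h.symm B' A' hB' hA'] at h2
    simp [h1, h2]
  · rintro ⟨I, hI⟩
    have hmn : (Ideal.span {(m : R)}) * Ideal.span {(n : R)} ≤ I := by
      rw [Ideal.span_singleton_mul_span_singleton, ← Nat.cast_mul, ← hI]
      exact Ideal.span_singleton_absNorm_le I
    have hprod : (I ⊔ Ideal.span {(m : R)}) * (I ⊔ Ideal.span {(n : R)}) = I := by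
      apply le_antisymm
      · rw [Ideal.sup_mul, Ideal.mul_sup, Ideal.mul_sup]
        exact sup_le (sup_le Ideal.mul_le_left Ideal.mul_le_left) (sup_le Ideal.mul_le_right hmn)
      · calc I = I * (Ideal.span {(m : R)} ⊔ Ideal.span {(n : R)}) := by
              rw [natcop_sup h, Ideal.mul_top]
          _ = I * Ideal.span {(m : R)} ⊔ I * Ideal.span {(n : R)} := Ideal.mul_sup _ _ _
          _ ≤ _ := by
            apply sup_le
            · rw [mul_comm]; exact Ideal.mul_mono le_sup_right le_sup_left
            · exact Ideal.mul_mono le_sup_left le_sup_right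
    have hd : ∀ {m n : ℕ}, m.Coprime n → Ideal.absNorm I = m * n →
        Ideal.absNorm (I ⊔ Ideal.span {(m : R)}) ∣ m := by
      intro m n h hI
      have h1 : Ideal.absNorm (I ⊔ Ideal.span {(m : R)}) ∣ m * n :=
        hI ▸ Ideal.absNorm_dvd_absNorm_of_le le_sup_left
      have h2 : Ideal.absNorm (I ⊔ Ideal.span {(m : R)}) ∣ m * m := by
        rw [← pow_two, ← hrk, ← Ideal.absNorm_span_natCast (S := R)]
        exact Ideal.absNorm_dvd_absNorm_of_le le_sup_right
      have := Nat.dvd_gcd h2 h1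
      rwa [Nat.gcd_mul_left, Nat.Coprime.gcd_eq_one h, mul_one] at this
    have d1 := hd h hI
    have d2 := hd h.symm (by rw [hI, mul_comm])
    have hn' := congrArg Ideal.absNorm hprod
    rw [map_mul, hI] at hn'
    have l1 := Nat.le_of_dvd (Nat.pos_of_ne_zero hm) d1
    have l2 := Nat.le_of_dvd (Nat.pos_of_ne_zero hn) d2
    have pm := Nat.pos_of_ne_zero hm
    have pn := Nat.pos_of_ne_zero hn
    have e1 : Ideal.absNorm (I ⊔ Ideal.span {(m : R)}) = m := by nlinarith
    have e2 : Ideal.absNorm (I ⊔ Ideal.span {(n : R)}) = n := by nlinarith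
    exact ⟨⟨⟨_, e1⟩, ⟨_, e2⟩⟩, Subtype.ext hprod⟩

lemma ideal_shape {p : ℕ} (hp : p.Prime) (P Q : Ideal R)
    (hPQ : ∀ M : Ideal R, M.IsPrime → (p : R) ∈ M → M = P ∨ M = Q) (I : Ideal R) :
    ∀ k, Ideal.absNorm I = p ^ k → ∃ i j, I = P ^ i * Q ^ j := by
  induction I using UniqueFactorizationMonoid.induction_on_prime with
  | h₁ =>
    intro k hk
    have : Ideal.absNorm (0 : Ideal R) = 0 := map_zero _
    rw [this] at hk
    exact absurd hk.symm (pow_ne_zero _ hp.ne_zero)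
  | h₂ x hx => intro k _; exact ⟨0, 0, by simpa using (Ideal.isUnit_iff.1 hx)⟩
  | h₃ J M hJ hM ih =>
    intro k hk
    rw [map_mul] at hk
    obtain ⟨k', -, hk'⟩ := (Nat.dvd_prime_pow hp).1 (Dvd.intro_left _ hk)
    obtain ⟨i, j, hij⟩ := ih k' hk'
    have hMp := Ideal.isPrime_of_prime hM
    have hpM : (p : R) ∈ M := by
      apply hMp.mem_of_pow_mem k
      obtain ⟨k'', -, hk''⟩ := (Nat.dvd_prime_pow hp).1 (Dvd.intro _ hk)
      have := Ideal.absNorm_mem M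
      have h2 : k'' ≤ k := by
        rw [hk''] at hk
        exact (Nat.pow_dvd_pow_iff_le_right hp.one_lt).1 (Dvd.intro _ hk)
      rw [hk''] at this
      push_cast at this
      rw [← Nat.sub_add_cancel h2, pow_add]
      exact M.mul_mem_left _ this
    rcases hPQ M hMp hpM with h | h
    · exact ⟨i + 1, j, by rw [hij, h]; ring⟩
    · exact ⟨i, j + 1, by rw [hij, h]; ring⟩

lemma icount_split {p : ℕ} (hp : p.Prime) (P Q : Ideal R) (hP : P.IsMaximal) (hQ : Q.IsMaximal) (hne : P ≠ Q)
    (hP1 : Ideal.absNorm P = p) (hQ1 : Ideal.absNorm Q = p)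
    (hPQ : ∀ M : Ideal R, M.IsPrime → (p : R) ∈ M → M = P ∨ M = Q) (k : ℕ) :
    icount R (p ^ k) = k + 1 := by
  unfold icount
  rw [← Nat.card_fin (k + 1)]
  symm
  have hP0 : P ≠ 0 := by
    rintro rfl
    have : Ideal.absNorm (0 : Ideal R) = 0 := map_zero _
    exact hp.ne_zero (by rw [← hP1, this])
  have inj : ∀ i j i' j' : ℕ, P ^ i * Q ^ j = P ^ i' * Q ^ j' → ¬ i < i' := by
    intro i j i' j' h hi
    obtain ⟨d, rfl⟩ := Nat.exists_eq_add_of_lt hi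
    rw [show i + d + 1 = i + (d + 1) by ring, pow_add, mul_assoc] at h
    have h := mul_left_cancel₀ (pow_ne_zero i hP0) h
    have : Q ^ j ≤ P := by
      rw [h, pow_succ]
      exact Ideal.mul_le_left.trans Ideal.mul_le_right
    have := hP.isPrime.le_of_pow_le this
    exact hne (hQ.eq_of_le hP.ne_top this).symm
  refine Nat.card_congr (Equiv.ofBijective
    (fun i : Fin (k + 1) => ⟨P ^ i.1 * Q ^ (k - i.1), by
      rw [map_mul, map_pow, map_pow, hP1, hQ1, ← pow_add]; congr 1; omega⟩) ⟨?_, ?_⟩)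
  · intro i i' h
    simp only [Subtype.mk.injEq] at h
    have h1 := inj _ _ _ _ h
    have h2 := inj _ _ _ _ h.symm
    exact Fin.ext (by omega)
  · rintro ⟨I, hI⟩
    obtain ⟨i, j, rfl⟩ := ideal_shape hp P Q hPQ I k hI
    rw [map_mul, map_pow, map_pow, hP1, hQ1, ← pow_add] at hI
    have := Nat.pow_right_injective hp.two_le hI
    refine ⟨⟨i, by omega⟩, ?_⟩
    simp only [Subtype.mk.injEq]
    congr 2; omega

lemma icount_ram {p : ℕ} (hp : p.Prime) (P : Ideal R) 
    (hP1 : Ideal.absNorm P = p)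
    (hPQ : ∀ M : Ideal R, M.IsPrime → (p : R) ∈ M → M = P) (k : ℕ) :
    icount R (p ^ k) = 1 := by
  unfold icount
  rw [Nat.card_eq_one_iff_unique]
  refine ⟨⟨?_⟩, ⟨⟨P ^ k, by rw [map_pow, hP1]⟩⟩⟩
  have : ∀ I : Ideal R, Ideal.absNorm I = p ^ k → I = P ^ k := by
    intro I hI
    obtain ⟨i, j, rfl⟩ := ideal_shape hp P P (fun M h1 h2 => Or.inl (hPQ M h1 h2)) I k hI
    rw [← pow_add] at hI ⊢
    rw [map_pow, hP1] at hI
    rw [Nat.pow_right_injective hp.two_le hI]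
  rintro ⟨I, hI⟩ ⟨J, hJ⟩
  exact Subtype.ext ((this I hI).trans (this J hJ).symm)

lemma icount_inert {p : ℕ} (hp : p.Prime) (P : Ideal R) 
    (hP1 : Ideal.absNorm P = p ^ 2)
    (hPQ : ∀ M : Ideal R, M.IsPrime → (p : R) ∈ M → M = P) (k : ℕ) :
    icount R (p ^ k) = if Even k then 1 else 0 := by
  unfold icount
  have key : ∀ I : Ideal R, Ideal.absNorm I = p ^ k → ∃ i, k = 2 * i ∧ I = P ^ i := by
    intro I hI
    obtain ⟨i, j, rfl⟩ := ideal_shape hp P P (fun M h1 h2 => Or.inl (hPQ M h1 h2)) I k hI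
    rw [← pow_add] at hI ⊢
    rw [map_pow, hP1, ← pow_mul] at hI
    exact ⟨_, (Nat.pow_right_injective hp.two_le hI).symm, rfl⟩
  split_ifs with hk
  · obtain ⟨m, hm⟩ := hk
    rw [Nat.card_eq_one_iff_unique]
    refine ⟨⟨?_⟩, ⟨⟨P ^ m, by rw [map_pow, hP1, ← pow_mul]; congr 1; omega⟩⟩⟩
    rintro ⟨I, hI⟩ ⟨J, hJ⟩
    obtain ⟨i, h1, h2⟩ := key I hI
    obtain ⟨j, h3, h4⟩ := key J hJ
    have : i = j := by omega
    subst this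
    exact Subtype.ext (h2.trans h4.symm)
  · rw [Nat.card_eq_zero]
    left
    constructor
    rintro ⟨I, hI⟩
    obtain ⟨i, h1, h2⟩ := key I hI
    exact hk ⟨i, by omega⟩
end idc
end G16

open Complex Polynomial IntermediateField
namespace G16
set_option linter.unusedSectionVars false

lemma root_two : ∀ c : ZMod 2, (∃ t : ZMod 2, t * t = t - c) ↔ c = 0 := by decide

lemma four_c {l : ℕ} (h4 : l % 4 = 3) : 4 * ((l + 1) / 4) = l + 1 := by omega

/-- existence of a root of `x^2 - x + c` mod `p` -/
lemma root_iff (l p : ℕ) [Fact l.Prime] [Fact p.Prime] (h4 : l % 4 = 3) (hpl : p ≠ l) :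
    (∃ t : ZMod p, t * t = t - ((l + 1) / 4 : ℕ)) ↔ quadraticChar (ZMod l) (p : ZMod l) = 1 := by
  have hc := four_c h4
  have hl : l.Prime := Fact.out
  have hp : p.Prime := Fact.out
  have hpl0 : (p : ZMod l) ≠ 0 := by
    rw [Ne, ZMod.natCast_eq_zero_iff, Nat.prime_dvd_prime_iff_eq hl hp]; exact fun h => hpl h.symm
  have hlp0 : (l : ZMod p) ≠ 0 := by
    rw [Ne, ZMod.natCast_eq_zero_iff, Nat.prime_dvd_prime_iff_eq hp hl]; exact hpl
  by_cases hp2 : p = 2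
  · subst hp2
    rw [quadraticChar_one_iff_isSquare hpl0]
    have : IsSquare ((2 : ℕ) : ZMod l) ↔ l % 8 = 7 := by
      rw [Nat.cast_two, ZMod.exists_sq_eq_two_iff (by omega)]; omega
    rw [this]
    have h0 : (((l + 1) / 4 : ℕ) : ZMod 2) = 0 ↔ l % 8 = 7 := by
      rw [ZMod.natCast_eq_zero_iff]; omega
    rw [← h0]
    generalize (((l + 1) / 4 : ℕ) : ZMod 2) = c
    exact root_two c
  · have hcc : (4 : ZMod p) * ((l + 1) / 4 : ℕ) = l + 1 := by exact_mod_cast congrArg (Nat.cast : ℕ → ZMod p) hc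
    have h20 : (2 : ZMod p) ≠ 0 := by
      have : ((2 : ℕ) : ZMod p) ≠ 0 := by
        rw [Ne, ZMod.natCast_eq_zero_iff, Nat.prime_dvd_prime_iff_eq hp Nat.prime_two]; exact hp2
      exact_mod_cast this
    have h1 : (∃ t : ZMod p, t * t = t - ((l + 1) / 4 : ℕ)) ↔ IsSquare (-(l : ZMod p)) := by
      constructor
      · rintro ⟨t, ht⟩
        exact ⟨2 * t - 1, by linear_combination -4 * ht + hcc⟩
      · rintro ⟨s, hs⟩
        refine ⟨(s + 1) / 2, ?_⟩
        field_simp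
        have h40 : (4 : ZMod p) ≠ 0 := by
          have := mul_ne_zero h20 h20; norm_num at this; exact this
        linear_combination -hs + hcc
    rw [h1]
    have h2 : IsSquare (-(l : ZMod p)) ↔ legendreSym p (-l) = 1 := by
      rw [legendreSym.eq_one_iff]
      · simp
      · simpa using hlp0
    have h3 : quadraticChar (ZMod l) (p : ZMod l) = legendreSym l p := by simp [legendreSym]
    rw [h2, h3]
    have : legendreSym p (-l) = legendreSym l p := by
      rw [← neg_one_mul, legendreSym.mul, legendreSym.at_neg_one hp2]
      rcases hp.eq_two_or_odd with h | h
      · exact absurd h hp2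
      · have h' : p % 4 = 1 ∨ p % 4 = 3 := by omega
        rcases h' with h' | h'
        · rw [ZMod.χ₄_nat_one_mod_four h', one_mul, legendreSym.quadratic_reciprocity_one_mod_four h' (by omega)]
        · rw [ZMod.χ₄_nat_three_mod_four h']
          have := legendreSym.quadratic_reciprocity_three_mod_four h4 h'
          rw [this]; ring
    rw [this]

section
variable {R : Type*} [CommRing R] [IsDedekindDomain R] [Module.Free ℤ R] [Module.Finite ℤ R] [CharZero R]
variable {c : ℕ} (e : QuadraticAlgebra ℤ (-(c:ℤ)) 1 ≃+* R)

lemma rank_two (e : QuadraticAlgebra ℤ (-(c:ℤ)) 1 ≃+* R) : Module.finrank ℤ R = 2 := by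
  rw [← QuadraticAlgebra.finrank_eq_two (R := ℤ) (-(c:ℤ)) 1]
  exact (LinearEquiv.finrank_eq (e.toAddEquiv.toIntLinearEquiv)).symm

lemma theta_sq (e : QuadraticAlgebra ℤ (-(c:ℤ)) 1 ≃+* R) :
    e QuadraticAlgebra.omega * e QuadraticAlgebra.omega = e QuadraticAlgebra.omega - c := by
  rw [← map_mul, QuadraticAlgebra.omega_mul_omega_eq_add]
  simp
  ring

lemma elt_form (e : QuadraticAlgebra ℤ (-(c:ℤ)) 1 ≃+* R) (x : R) :
    ∃ a b : ℤ, x = a + b * e QuadraticAlgebra.omega := by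
  refine ⟨(e.symm x).re, (e.symm x).im, ?_⟩
  have : e.symm x = ((e.symm x).re : QuadraticAlgebra ℤ (-(c:ℤ)) 1) + ((e.symm x).im : QuadraticAlgebra ℤ (-(c:ℤ)) 1) * QuadraticAlgebra.omega := by
    ext <;> simp
  rw [← map_intCast e, ← map_intCast e, ← map_mul, ← map_add, ← this]; simp

lemma root_hom (e : QuadraticAlgebra ℤ (-(c:ℤ)) 1 ≃+* R) {p : ℕ} (t : ZMod p) (ht : t * t = t - c) :
    ∃ φ : R →+* ZMod p, φ (e QuadraticAlgebra.omega) = t := by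
  refine ⟨(QuadraticAlgebra.lift ⟨t, by simp [ht]; ring⟩ : QuadraticAlgebra ℤ (-(c:ℤ)) 1 →ₐ[ℤ] ZMod p).toRingHom.comp e.symm.toRingHom, ?_⟩
  simp

lemma ker_props {p : ℕ} [Fact p.Prime] (φ : R →+* ZMod p) :
    (RingHom.ker φ).IsMaximal ∧ Ideal.absNorm (RingHom.ker φ) = p := by
  have hs : Function.Surjective φ := ZMod.ringHom_surjective φ
  refine ⟨RingHom.ker_isMaximal_of_surjective φ hs, ?_⟩
  rw [Ideal.absNorm_apply, Submodule.cardQuot_apply,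
    Nat.card_congr (RingHom.quotientKerEquivOfSurjective hs).toEquiv, Nat.card_zmod]

lemma le_of_theta (e : QuadraticAlgebra ℤ (-(c:ℤ)) 1 ≃+* R) {p : ℕ} [Fact p.Prime] (t : ZMod p)
    (φ : R →+* ZMod p) (hφ : φ (e QuadraticAlgebra.omega) = t) (M : Ideal R) (hpM : (p : R) ∈ M)
    (hM : e QuadraticAlgebra.omega - (t.val : R) ∈ M) : RingHom.ker φ ≤ M := by
  intro x hx
  obtain ⟨a, b, rfl⟩ := elt_form e x
  rw [RingHom.mem_ker, map_add, map_mul, hφ, map_intCast, map_intCast] at hx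
  have h1 : ((a + b * t.val : ℤ) : ZMod p) = 0 := by push_cast; rw [ZMod.natCast_zmod_val]; exact hx
  rw [ZMod.intCast_zmod_eq_zero_iff_dvd] at h1
  obtain ⟨d, hd⟩ := h1
  have : (a : R) + b * e QuadraticAlgebra.omega = (p : R) * d + b * (e QuadraticAlgebra.omega - (t.val : R)) := by
    have : ((a + b * t.val : ℤ) : R) = ((p * d : ℤ) : R) := by rw [hd]
    push_cast at this
    linear_combination this
  rw [this]
  exact M.add_mem (M.mul_mem_right _ hpM) (M.mul_mem_left _ hM)

lemma icount_prime_pow (e : QuadraticAlgebra ℤ (-(c:ℤ)) 1 ≃+* R) (l p : ℕ) [Fact l.Prime] [Fact p.Prime]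
    (h4 : l % 4 = 3) (hc : c = (l + 1) / 4) (k : ℕ) :
    (icount R (p ^ k) : ℤ) = ∑ i ∈ Finset.range (k + 1), quadraticChar (ZMod l) (p : ZMod l) ^ i := by
  have hp : p.Prime := Fact.out
  have hcc : (4 : ZMod p) * c = l + 1 := by
    rw [hc]; exact_mod_cast congrArg (Nat.cast : ℕ → ZMod p) (four_c h4)
  have hθ := theta_sq e
  -- splitting when a root exists
  have split : ∀ t : ZMod p, t * t = t - c → ∃ P Q : Ideal R, P.IsMaximal ∧ Q.IsMaximal ∧
      Ideal.absNorm P = p ∧ Ideal.absNorm Q = p ∧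
      (∀ M : Ideal R, M.IsPrime → (p : R) ∈ M → M = P ∨ M = Q) ∧ (P = Q ↔ 2 * t = 1) := by
    intro t ht
    have ht' : (1 - t) * (1 - t) = (1 - t) - c := by linear_combination ht
    obtain ⟨φ, hφ⟩ := root_hom e t ht
    obtain ⟨ψ, hψ⟩ := root_hom e (1 - t) ht'
    refine ⟨RingHom.ker φ, RingHom.ker ψ, (ker_props φ).1, (ker_props ψ).1, (ker_props φ).2, (ker_props ψ).2, ?_, ?_⟩
    · intro M hM hpM
      have hprod : (e QuadraticAlgebra.omega - (t.val : R)) * (e QuadraticAlgebra.omega - ((1 - t).val : R)) ∈ M := by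
        have h1 : ((t.val + (1 - t).val - 1 : ℤ) : ZMod p) = 0 := by push_cast; simp
        have h2 : ((t.val * (1 - t).val - c : ℤ) : ZMod p) = 0 := by
          push_cast; simp only [ZMod.natCast_zmod_val]; linear_combination -ht
        rw [ZMod.intCast_zmod_eq_zero_iff_dvd] at h1 h2
        obtain ⟨d1, hd1⟩ := h1
        obtain ⟨d2, hd2⟩ := h2
        have h1 := congrArg (Int.cast : ℤ → R) hd1
        have h2 := congrArg (Int.cast : ℤ → R) hd2
        push_cast at h1 h2
        have : (e QuadraticAlgebra.omega - (t.val : R)) * (e QuadraticAlgebra.omega - ((1 - t).val : R)) =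
          p * (d2 - d1 * e QuadraticAlgebra.omega) := by
          linear_combination hθ - e QuadraticAlgebra.omega * h1 + h2
        rw [this]
        exact M.mul_mem_right _ hpM
      rcases hM.mem_or_mem hprod with h | h
      · left
        exact ((ker_props φ).1.eq_of_le hM.ne_top (le_of_theta e t φ hφ M hpM h)).symm
      · right
        exact ((ker_props ψ).1.eq_of_le hM.ne_top (le_of_theta e _ ψ hψ M hpM h)).symm
    · constructor
      · intro h
        have h1 : e QuadraticAlgebra.omega - (t.val : R) ∈ RingHom.ker φ := by
          rw [RingHom.mem_ker, map_sub, hφ, map_natCast]; simp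
        rw [h, RingHom.mem_ker, map_sub, hψ, map_natCast, ZMod.natCast_zmod_val] at h1
        linear_combination -h1
      · intro h
        have : φ = ψ := by
          ext x
          obtain ⟨a, b, rfl⟩ := elt_form e x
          rw [map_add, map_mul, map_add, map_mul, hφ, hψ]
          simp only [map_intCast]
          linear_combination b * h
        rw [this]
  by_cases hpl : p = l
  · subst hpl
    have h20 : (2 : ZMod p) ≠ 0 := by
      have : ((2 : ℕ) : ZMod p) ≠ 0 := by
        rw [Ne, ZMod.natCast_eq_zero_iff, Nat.prime_dvd_prime_iff_eq hp Nat.prime_two]; omega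
      exact_mod_cast this
    have h40 : (4 : ZMod p) ≠ 0 := by
      have := mul_ne_zero h20 h20; norm_num at this; exact this
    have ht2 : 2 * ((1 : ZMod p) / 2) = 1 := by field_simp
    obtain ⟨P, Q, -, -, hP, -, hall, heq⟩ := split (1 / 2) (by
      simp only [CharP.cast_eq_zero, zero_add] at hcc
      apply mul_left_cancel₀ h40
      linear_combination ((2 : ZMod p) * (1/2) + 1 - 2) * ht2 + hcc)
    have hPQ := heq.2 ht2
    subst hPQ
    rw [icount_ram hp P hP (fun M h1 h2 => by simpa using hall M h1 h2) k]
    simp [Finset.sum_range_succ']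
  · have hri := root_iff l p h4 hpl
    have hpl0 : (p : ZMod l) ≠ 0 := by
      rw [Ne, ZMod.natCast_eq_zero_iff, Nat.prime_dvd_prime_iff_eq Fact.out hp]; exact fun h => hpl h.symm
    by_cases hroot : ∃ t : ZMod p, t * t = t - ((l + 1) / 4 : ℕ)
    · rw [hri.1 hroot]
      obtain ⟨t, ht⟩ := hroot
      rw [← hc] at ht
      obtain ⟨P, Q, hPm, hQm, hP, hQ, hall, heq⟩ := split t ht
      have hne : P ≠ Q := by
        rw [Ne, heq]
        intro h
        have : (l : ZMod p) = 0 := by linear_combination 4 * ht - hcc - (2 * t - 1) * h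
        rw [ZMod.natCast_eq_zero_iff, Nat.prime_dvd_prime_iff_eq hp Fact.out] at this
        exact hpl this
      rw [icount_split hp P Q hPm hQm hne hP hQ hall k]
      simp
    · have hχ : quadraticChar (ZMod l) (p : ZMod l) = -1 := by
        rcases quadraticChar_dichotomy hpl0 with h | h
        · exact absurd (hri.2 h) hroot
        · exact h
      rw [hχ]
      rw [icount_inert hp (Ideal.span {(p : R)}) (by rw [Ideal.absNorm_span_natCast, rank_two e])]
      · clear split
        induction k with
        | zero => simp
        | succ k ih =>
          rw [Finset.sum_range_succ, ← ih]
          rcases Nat.even_or_odd k with h | h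
          · have h' : ¬ Even (k + 1) := by rw [Nat.not_even_iff_odd]; exact h.add_one
            simp [h, h']
          · have h' : Even (k + 1) := h.add_one
            have h'' : ¬ Even k := by rwa [Nat.not_even_iff_odd]
            simp [h', h'']
      · intro M hM hpM
        apply le_antisymm _ (by rwa [Ideal.span_singleton_le_iff_mem])
        intro x hx
        obtain ⟨a, b, rfl⟩ := elt_form e x
        have hn : ((a ^ 2 + a * b + c * b ^ 2 : ℤ) : R) ∈ M := by
          have : ((a ^ 2 + a * b + c * b ^ 2 : ℤ) : R) = (a + b * e QuadraticAlgebra.omega) * (a + b * (1 - e QuadraticAlgebra.omega)) := by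
            push_cast
            linear_combination b ^ 2 * hθ
          rw [this]
          exact M.mul_mem_right _ hx
        have hdvd : (p : ℤ) ∣ (a ^ 2 + a * b + c * b ^ 2 : ℤ) := by
          by_contra hnd
          have hcop : IsCoprime (p : ℤ) (a ^ 2 + a * b + c * b ^ 2 : ℤ) :=
            (Nat.prime_iff_prime_int.1 hp).coprime_iff_not_dvd.2 hnd
          obtain ⟨u, v, huv⟩ := hcop
          apply hM.ne_top
          rw [Ideal.eq_top_iff_one]
          have : (1 : R) = u * p + v * ((a ^ 2 + a * b + c * b ^ 2 : ℤ) : R) := by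
            have := congrArg (Int.cast : ℤ → R) huv
            push_cast at this ⊢
            exact this.symm
          rw [this]
          exact M.add_mem (M.mul_mem_left _ hpM) (M.mul_mem_left _ hn)
        have hz : (a : ZMod p) ^ 2 + a * b + c * b ^ 2 = 0 := by
          rw [← ZMod.intCast_zmod_eq_zero_iff_dvd] at hdvd
          exact_mod_cast hdvd
        have hb : (b : ZMod p) = 0 := by
          by_contra hb
          apply hroot
          refine ⟨-a / b, ?_⟩
          rw [← hc]
          field_simp
          linear_combination hz
        have ha : (a : ZMod p) = 0 := by
          rw [hb] at hz
          simpa using hz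
        rw [ZMod.intCast_zmod_eq_zero_iff_dvd] at ha hb
        obtain ⟨a', rfl⟩ := ha
        obtain ⟨b', rfl⟩ := hb
        rw [Ideal.mem_span_singleton]
        exact ⟨a' + b' * e QuadraticAlgebra.omega, by push_cast; ring⟩

lemma icount_eq (e : QuadraticAlgebra ℤ (-(c:ℤ)) 1 ≃+* R) (l : ℕ) [Fact l.Prime] 
    (h4 : l % 4 = 3) (hc : c = (l + 1) / 4) (n : ℕ) (hn : n ≠ 0) :
    (icount R n : ℤ) = ∑ d ∈ n.divisors, quadraticChar (ZMod l) (d : ZMod l) := by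
  induction n using Nat.recOnPosPrimePosCoprime with
  | zero => exact absurd rfl hn
  | one =>
    simp [icount, Ideal.absNorm_eq_one_iff]
  | prime_pow p k hp hk =>
    have := Fact.mk hp
    rw [icount_prime_pow e l p h4 hc k, Nat.sum_divisors_prime_pow hp]
    exact Finset.sum_congr rfl fun i _ => by rw [Nat.cast_pow, map_pow]
  | coprime a b ha hb hab iha ihb =>
    rw [icount_mul (by omega) (by omega) hab (rank_two e), Nat.cast_mul, iha (by omega), ihb (by omega),
      Nat.divisors_mul, Finset.mul_def, Finset.sum_image hab.mul_injOn_divisors, Finset.sum_product, Finset.sum_mul_sum]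
    simp only [Nat.cast_mul, map_mul]
end
end G16

open Complex Polynomial IntermediateField
namespace G16

lemma rat_int {q : ℚ} (h : IsIntegral ℤ ((q : ℚ) : ℂ)) : ∃ n : ℤ, q = n := by
  have h2 : IsIntegral ℤ q := by
    have : ((q : ℚ) : ℂ) = algebraMap ℚ ℂ q := by simp
    rw [this] at h
    exact (isIntegral_algebraMap_iff (algebraMap ℚ ℂ).injective).1 h
  obtain ⟨n, hn⟩ := IsIntegrallyClosed.isIntegral_iff.1 h2
  exact ⟨n, by simpa using hn.symm⟩

lemma conj_sqrtNeg (l : ℕ) : (starRingEnd ℂ) (sqrtNeg l) = - sqrtNeg l := by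
  simp [sqrtNeg]

/-- rational `w` with `l w^2` integral is an integer -/
lemma lw_int {l : ℕ} (hl : l.Prime) {w : ℚ} {n : ℤ} (h : (l : ℚ) * w ^ 2 = n) : ∃ k : ℤ, w = k := by
  have hl0 : (l : ℚ) ≠ 0 := by exact_mod_cast hl.ne_zero
  have h1 : (l * w) ^ 2 = ((l * n : ℤ) : ℚ) := by push_cast; rw [← h]; ring
  have h2 : IsIntegral ℤ ((l : ℚ) * w) := by
    apply IsIntegral.of_pow (n := 2) (by norm_num)
    rw [h1]
    exact isIntegral_algebraMap (A := ℚ) (x := (l * n : ℤ))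
  obtain ⟨k, hk⟩ := IsIntegrallyClosed.isIntegral_iff.1 h2
  simp only [algebraMap_int_eq, eq_intCast] at hk
  have h3 : k ^ 2 = l * n := by
    rw [← hk] at h1; exact_mod_cast h1
  have h4 : (l : ℤ) ∣ k := (Nat.prime_iff_prime_int.1 hl).dvd_of_dvd_pow (Dvd.intro _ h3.symm)
  obtain ⟨m, rfl⟩ := h4
  exact ⟨m, by push_cast at hk; exact (mul_left_cancel₀ hl0 hk).symm⟩

lemma integral_form {l : ℕ} (hl : l.Prime) {u v : ℚ} (h : IsIntegral ℤ ((u : ℂ) + v * sqrtNeg l)) :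
    ∃ m w n : ℤ, 2 * u = m ∧ 2 * v = w ∧ m ^ 2 + l * w ^ 2 = 4 * n := by
  have hc : IsIntegral ℤ ((u : ℂ) - v * sqrtNeg l) := by
    have := h.map (starRingEnd ℂ).toIntAlgHom
    simp only [RingHom.toIntAlgHom_apply, map_add, map_mul, conj_sqrtNeg] at this
    simpa [sub_eq_add_neg] using this
  have h1 : IsIntegral ℤ (((2 * u : ℚ)) : ℂ) := by
    have := h.add hc
    have e : (((2 * u : ℚ)) : ℂ) = ((u : ℂ) + v * sqrtNeg l) + ((u : ℂ) - v * sqrtNeg l) := by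
      push_cast; ring
    rw [e]; exact this
  have h2 : IsIntegral ℤ (((u ^ 2 + l * v ^ 2 : ℚ)) : ℂ) := by
    have := h.mul hc
    have e : (((u ^ 2 + l * v ^ 2 : ℚ)) : ℂ) = ((u : ℂ) + v * sqrtNeg l) * ((u : ℂ) - v * sqrtNeg l) := by
      push_cast; linear_combination (v : ℂ) ^ 2 * sqrtNeg_sq l
    rw [e]; exact this
  obtain ⟨m, hm⟩ := rat_int h1
  obtain ⟨n, hn⟩ := rat_int h2
  obtain ⟨w, hw⟩ := lw_int (l := l) hl (w := 2 * v) (n := 4 * n - m ^ 2) (by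
    push_cast; rw [← hn, ← hm]; ring)
  refine ⟨m, w, n, hm, hw, ?_⟩
  have : ((m ^ 2 + l * w ^ 2 : ℤ) : ℚ) = ((4 * n : ℤ) : ℚ) := by
    push_cast; rw [← hn, ← hm, ← hw]; ring
  exact_mod_cast this

lemma sqrtNeg_indep {l : ℕ} (hl : 0 < l) {u v : ℝ} (h : (u : ℂ) + v * sqrtNeg l = 0) : u = 0 ∧ v = 0 := by
  have h1 := congrArg Complex.re h
  have h2 := congrArg Complex.im h
  simp [sqrtNeg] at h1 h2
  refine ⟨h1, ?_⟩
  rcases h2 with h2 | h2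
  · exact h2
  · omega

lemma mem_form {l : ℕ} (x : ℂ) (hx : x ∈ ℚ⟮sqrtNeg l⟯) : ∃ u v : ℚ, x = u + v * sqrtNeg l := by
  rw [← IntermediateField.mem_toSubalgebra, 
    IntermediateField.adjoin_simple_toSubalgebra_of_isAlgebraic (isIntegral_sqrtNeg l).isAlgebraic] at hx
  induction hx using Algebra.adjoin_induction with
  | mem x hx => 
    rw [Set.mem_singleton_iff] at hx
    exact ⟨0, 1, by simp [hx]⟩
  | algebraMap r => exact ⟨r, 0, by simp⟩
  | add x y _ _ hx hy =>
    obtain ⟨u, v, rfl⟩ := hx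
    obtain ⟨u', v', rfl⟩ := hy
    exact ⟨u + u', v + v', by push_cast; ring⟩
  | mul x y _ _ hx hy =>
    obtain ⟨u, v, rfl⟩ := hx
    obtain ⟨u', v', rfl⟩ := hy
    exact ⟨u * u' - l * v * v', u * v' + v * u', by push_cast; linear_combination v * v' * sqrtNeg_sq l⟩

instance nfK (l : ℕ) : NumberField ℚ⟮sqrtNeg l⟯ :=
  haveI : FiniteDimensional ℚ ℚ⟮sqrtNeg l⟯ :=
    IntermediateField.adjoin.finiteDimensional (isIntegral_sqrtNeg l)
  haveI : CharZero ℚ⟮sqrtNeg l⟯ :=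
    charZero_of_injective_algebraMap (algebraMap ℚ ℚ⟮sqrtNeg l⟯).injective
  ⟨⟩

lemma classNum_eq (l : ℕ) : classNumSqrtNeg l = NumberField.classNumber ℚ⟮sqrtNeg l⟯ := rfl

open NumberField in
theorem exists_equiv (l : ℕ) (hl : l.Prime) (h4 : l % 4 = 3) :
    Nonempty (QuadraticAlgebra ℤ (-(((l + 1) / 4 : ℕ):ℤ)) 1 ≃+* 𝓞 ℚ⟮sqrtNeg l⟯) := by
  set c := (l + 1) / 4 with hc
  have hcc := four_c h4
  rw [← hc] at hcc
  have hcC : (4 : ℂ) * c = l + 1 := by exact_mod_cast congrArg (Nat.cast : ℕ → ℂ) hcc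
  let K := ℚ⟮sqrtNeg l⟯
  let s : K := IntermediateField.AdjoinSimple.gen ℚ (sqrtNeg l)
  have hs : algebraMap K ℂ s = sqrtNeg l := IntermediateField.AdjoinSimple.algebraMap_gen ℚ _
  let th : K := (1 + s) / 2
  have hth : algebraMap K ℂ th = (1 + sqrtNeg l) / 2 := by
    rw [map_div₀, map_add, map_one, hs, map_ofNat]
  have hth2 : th * th = th - c := by
    apply (algebraMap K ℂ).injective
    rw [map_mul, map_sub, hth, map_natCast]
    linear_combination (1 / 4 : ℂ) * sqrtNeg_sq l + (1 / 4 : ℂ) * hcC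
  have hint : IsIntegral ℤ th := by
    refine ⟨X ^ 2 - X + C (c : ℤ), ?_, ?_⟩
    · monicity!
    · simp only [eval₂_add, eval₂_sub, eval₂_X_pow, eval₂_X, eval₂_C]
      simp
      linear_combination hth2
  obtain ⟨θ, hθ⟩ : ∃ θ : 𝓞 K, algebraMap (𝓞 K) K θ = th := ⟨⟨th, hint⟩, rfl⟩
  have hθ2 : θ * θ = (-(c:ℤ)) • (1 : 𝓞 K) + (1 : ℤ) • θ := by
    apply RingOfIntegers.ext
    simp only [map_mul, map_add, neg_smul, one_smul, map_neg, hθ, zsmul_eq_mul, mul_one, map_intCast]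
    push_cast
    linear_combination hth2
  let φ : QuadraticAlgebra ℤ (-(c:ℤ)) 1 →ₐ[ℤ] 𝓞 K := QuadraticAlgebra.lift ⟨θ, hθ2⟩
  have hφ : ∀ z, algebraMap K ℂ (φ z : K) = z.re + z.im * ((1 + sqrtNeg l) / 2) := by
    intro z
    rw [← hth]
    simp [φ, hθ]
  refine ⟨RingEquiv.ofBijective φ ⟨?_, ?_⟩⟩
  · rw [injective_iff_map_eq_zero]
    intro z hz
    have h1 := hφ z
    rw [hz] at h1
    have h2 := sqrtNeg_indep (l := l) hl.pos (u := z.re + z.im / 2) (v := z.im / 2) (by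
      push_cast
      simp only [map_zero] at h1
      linear_combination -h1)
    have h3 : (z.im : ℝ) = 0 := by linarith [h2.2]
    have h4 : (z.re : ℝ) = 0 := by linarith [h2.1]
    ext
    · exact_mod_cast h4
    · exact_mod_cast h3
  · intro x
    obtain ⟨u, v, huv⟩ := mem_form (l := l) (algebraMap K ℂ (x : K)) (x : K).2
    have hx : IsIntegral ℤ (algebraMap K ℂ (x : K)) := 
      (RingOfIntegers.isIntegral_coe x).map (algebraMap K ℂ).toIntAlgHom
    rw [huv] at hx
    obtain ⟨m, w, n, hm, hw, hmn⟩ := integral_form hl hx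
    have hpar : (2 : ℤ) ∣ m - w := by
      have : (2 : ℤ) ∣ m ^ 2 + l * w ^ 2 := ⟨2 * n, by linarith⟩
      have hl' : Odd (l : ℤ) := by
        have : Odd l := Nat.odd_iff.2 (by omega)
        exact_mod_cast this
      rw [← even_iff_two_dvd] at this ⊢
      rw [Int.even_add, Int.even_mul, Int.even_pow' two_ne_zero, Int.even_pow' two_ne_zero] at this
      rw [← Int.not_even_iff_odd] at hl'
      rw [Int.even_sub]
      tauto
    obtain ⟨d, hd⟩ := hpar
    refine ⟨⟨d, w⟩, ?_⟩
    apply RingOfIntegers.ext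
    apply (algebraMap K ℂ).injective
    rw [hφ, huv]
    have hu : (u : ℂ) = m / 2 := by
      have : u = m / 2 := by linarith
      rw [this]; push_cast; ring
    have hv : (v : ℂ) = w / 2 := by
      have : v = w / 2 := by linarith
      rw [this]; push_cast; ring
    have hm' : (m : ℂ) - w = 2 * d := by exact_mod_cast congrArg (Int.cast : ℤ → ℂ) hd
    rw [hu, hv]
    simp only
    linear_combination (-1 / 2 : ℂ) * hm'
end G16

open Complex Polynomial IntermediateField
namespace G16
open NumberField NumberField.InfinitePlace NumberField.Units
open scoped QuadraticAlgebra

lemma discr_qa (c : ℕ) : Algebra.discr ℤ (QuadraticAlgebra.basis (-(c:ℤ)) 1) = 1 - 4 * c := by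
  have tr : ∀ z : QuadraticAlgebra ℤ (-(c:ℤ)) 1, Algebra.trace ℤ _ z = 2 * z.re + z.im := by
    intro z
    rw [Algebra.trace_eq_matrix_trace (QuadraticAlgebra.basis (-(c:ℤ)) 1), Matrix.trace_fin_two,
      Algebra.leftMulMatrix_eq_repr_mul, Algebra.leftMulMatrix_eq_repr_mul]
    have e0 : QuadraticAlgebra.basis (-(c:ℤ)) 1 0 = 1 := by
      apply (QuadraticAlgebra.basis (-(c:ℤ)) 1).repr.injective
      ext i; fin_cases i <;> simp [QuadraticAlgebra.re_one, QuadraticAlgebra.im_one]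
    have e1 : QuadraticAlgebra.basis (-(c:ℤ)) 1 1 = QuadraticAlgebra.omega := by
      apply (QuadraticAlgebra.basis (-(c:ℤ)) 1).repr.injective
      ext i; fin_cases i <;> simp [QuadraticAlgebra.re_one, QuadraticAlgebra.im_one]
    rw [e0, e1]
    simp [QuadraticAlgebra.re_one, QuadraticAlgebra.im_one]
    ring
  have e0 : QuadraticAlgebra.basis (-(c:ℤ)) 1 0 = 1 := by
    apply (QuadraticAlgebra.basis (-(c:ℤ)) 1).repr.injective
    ext i; fin_cases i <;> simp [QuadraticAlgebra.re_one, QuadraticAlgebra.im_one]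
  have e1 : QuadraticAlgebra.basis (-(c:ℤ)) 1 1 = QuadraticAlgebra.omega := by
    apply (QuadraticAlgebra.basis (-(c:ℤ)) 1).repr.injective
    ext i; fin_cases i <;> simp [QuadraticAlgebra.re_one, QuadraticAlgebra.im_one]
  rw [Algebra.discr_def, Matrix.det_fin_two]
  simp only [Algebra.traceMatrix_apply, Algebra.traceForm_apply, tr, e0, e1]
  simp [QuadraticAlgebra.re_one, QuadraticAlgebra.im_one]
  ring

lemma discr_K (l : ℕ) (hl : l.Prime) (h4 : l % 4 = 3) : discr ℚ⟮sqrtNeg l⟯ = -l := by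
  obtain ⟨e⟩ := exists_equiv l hl h4
  let e' : QuadraticAlgebra ℤ (-(((l + 1) / 4 : ℕ):ℤ)) 1 ≃ₐ[ℤ] 𝓞 ℚ⟮sqrtNeg l⟯ :=
    AlgEquiv.ofRingEquiv (f := e) fun _ ↦ by simp
  rw [← discr_eq_discr _ ((QuadraticAlgebra.basis (-(((l + 1) / 4 : ℕ):ℤ)) 1).map e'.toLinearEquiv)]
  have := Algebra.discr_eq_discr_of_algEquiv (QuadraticAlgebra.basis (-(((l + 1) / 4 : ℕ):ℤ)) 1) e'
  rw [discr_qa] at this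
  have hcc : (4 : ℤ) * ((l + 1) / 4 : ℕ) = l + 1 := by exact_mod_cast four_c h4
  have h2 : (⇑((QuadraticAlgebra.basis (-(((l + 1) / 4 : ℕ):ℤ)) 1).map e'.toLinearEquiv)) = 
    e' ∘ (QuadraticAlgebra.basis (-(((l + 1) / 4 : ℕ):ℤ)) 1) := by
    ext i; simp
  rw [h2, ← this]
  linarith

lemma torsion_K (l : ℕ) (hl : l.Prime) (h4 : l % 4 = 3) (h7 : 7 ≤ l) : torsionOrder ℚ⟮sqrtNeg l⟯ = 2 := by
  obtain ⟨e⟩ := exists_equiv l hl h4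
  have hcc : (4 : ℤ) * ((l + 1) / 4 : ℕ) = l + 1 := by exact_mod_cast four_c h4
  have hu : ∀ u : (𝓞 ℚ⟮sqrtNeg l⟯)ˣ, u = 1 ∨ u = -1 := by
    intro u
    have h1 : IsUnit (e.symm (u : 𝓞 ℚ⟮sqrtNeg l⟯)) := u.isUnit.map e.symm
    have h2 := QuadraticAlgebra.isUnit_iff_norm_isUnit.1 h1
    set z := e.symm (u : 𝓞 ℚ⟮sqrtNeg l⟯) with hz
    have hu' : (u : 𝓞 ℚ⟮sqrtNeg l⟯) = e z := by simp [hz]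
    rw [Int.isUnit_iff, QuadraticAlgebra.norm_def] at h2
    have h3 : (2 * z.re + z.im) ^ 2 + l * z.im ^ 2 ≤ 4 := by
      rcases h2 with h | h <;> nlinarith
    have hl7 : (7 : ℤ) ≤ l := by exact_mod_cast h7
    have him : z.im = 0 := by
      by_contra h
      have : 0 < z.im ^ 2 := by positivity
      nlinarith [sq_nonneg (2 * z.re + z.im)]
    rw [him] at h2
    have hre : z.re = 1 ∨ z.re = -1 := by
      have : z.re * z.re = 1 := by
        rcases h2 with h | h
        · linarith
        · nlinarith [sq_nonneg z.re]
      exact mul_self_eq_one_iff.1 this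
    rcases hre with h | h
    · left
      have : z = 1 := by ext <;> simp [h, him, QuadraticAlgebra.re_one, QuadraticAlgebra.im_one]
      apply Units.ext
      rw [hu', this]; simp
    · right
      have : z = -1 := by ext <;> simp [h, him, QuadraticAlgebra.re_one, QuadraticAlgebra.im_one]
      apply Units.ext
      rw [hu', this]; simp
  have hne : (1 : (𝓞 ℚ⟮sqrtNeg l⟯)ˣ) ≠ -1 := by
    intro h
    have := congrArg Units.val h
    simp at this
    have h2 : (2 : 𝓞 ℚ⟮sqrtNeg l⟯) = 0 := by linear_combination this
    norm_num at h2
  unfold torsionOrder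
  rw [Nat.card_eq_two_iff]
  have hm : (-1 : (𝓞 ℚ⟮sqrtNeg l⟯)ˣ) ∈ torsion ℚ⟮sqrtNeg l⟯ := by
    rw [torsion, CommGroup.mem_torsion, isOfFinOrder_iff_pow_eq_one]
    exact ⟨2, by norm_num, by simp⟩
  refine ⟨1, ⟨-1, hm⟩, ?_, ?_⟩
  · intro h
    exact hne (congrArg Subtype.val h)
  · rw [Set.eq_univ_iff_forall]
    rintro ⟨u, hu'⟩
    rcases hu u with rfl | rfl
    · left; rfl
    · right; rfl

lemma finrank_K (l : ℕ) (hl : l.Prime) (h4 : l % 4 = 3) : Module.finrank ℚ ℚ⟮sqrtNeg l⟯ = 2 := by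
  obtain ⟨e⟩ := exists_equiv l hl h4
  rw [← RingOfIntegers.rank, rank_two e]

lemma real_K (l : ℕ) (hl : l.Prime) : nrRealPlaces ℚ⟮sqrtNeg l⟯ = 0 := by
  have : IsTotallyComplex ℚ⟮sqrtNeg l⟯ := by
    constructor
    intro w
    rw [← not_isReal_iff_isComplex]
    intro hw
    let s : ℚ⟮sqrtNeg l⟯ := IntermediateField.AdjoinSimple.gen ℚ (sqrtNeg l)
    have hs : s ^ 2 = -(l : ℚ⟮sqrtNeg l⟯) := by
      apply (algebraMap ℚ⟮sqrtNeg l⟯ ℂ).injective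
      rw [map_pow, IntermediateField.AdjoinSimple.algebraMap_gen, sqrtNeg_sq]; simp
    have := congrArg (embedding_of_isReal hw) hs
    rw [map_pow, map_neg, map_natCast] at this
    have hl0 : (0 : ℝ) < l := by exact_mod_cast hl.pos
    nlinarith [sq_nonneg (embedding_of_isReal hw s)]
  exact IsTotallyComplex.nrRealPlaces_eq_zero _

lemma complex_K (l : ℕ) (hl : l.Prime) (h4 : l % 4 = 3) : nrComplexPlaces ℚ⟮sqrtNeg l⟯ = 1 := by
  have := card_add_two_mul_card_eq_rank ℚ⟮sqrtNeg l⟯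
  rw [real_K l hl, finrank_K l hl h4] at this
  omega

lemma reg_K (l : ℕ) (hl : l.Prime) (h4 : l % 4 = 3) : regulator ℚ⟮sqrtNeg l⟯ = 1 := by
  have hr : rank ℚ⟮sqrtNeg l⟯ = 0 := by
    have := card_eq_nrRealPlaces_add_nrComplexPlaces ℚ⟮sqrtNeg l⟯
    rw [real_K l hl, complex_K l hl h4] at this
    rw [rank, this]
  have : IsEmpty {w : InfinitePlace ℚ⟮sqrtNeg l⟯ // w ≠ dirichletUnitTheorem.w₀} := by
    have := (equivFinRank ℚ⟮sqrtNeg l⟯).symm.isEmpty_congr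
    rw [this, hr]; infer_instance
  rw [regulator_eq_det']
  simp

theorem residue_K (l : ℕ) (hl : l.Prime) (h4 : l % 4 = 3) (h7 : 7 ≤ l) :
    dedekindZeta_residue ℚ⟮sqrtNeg l⟯ = Real.pi * classNumSqrtNeg l / Real.sqrt l := by
  rw [dedekindZeta_residue_def, real_K l hl, complex_K l hl h4, reg_K l hl h4, torsion_K l hl h4 h7,
    discr_K l hl h4, classNum_eq]
  simp
  field_simp
end G16

open Complex Polynomial IntermediateField
namespace G16
open NumberField Filter Topology

lemma zeta_K (l : ℕ) [Fact l.Prime] (h4 : l % 4 = 3) {s : ℂ} (hs : 1 < s.re) :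
    dedekindZeta ℚ⟮sqrtNeg l⟯ s = DirichletCharacter.LFunction (qc l) s * riemannZeta s := by
  obtain ⟨e⟩ := exists_equiv l (Fact.out) h4
  rw [DirichletCharacter.LFunction_eq_LSeries _ hs, ← LSeries_one_eq_riemannZeta hs,
    ← LSeries_convolution' (DirichletCharacter.LSeriesSummable_of_one_lt_re (qc l) hs)
      (LSeriesSummable_one_iff.2 hs), dedekindZeta]
  apply LSeries_congr
  intro n hn
  have := icount_eq e l h4 rfl n hn
  rw [LSeries.convolution_def]
  have h2 : ((icount (𝓞 ℚ⟮sqrtNeg l⟯) n : ℤ) : ℂ) = _ := congrArg (Int.cast : ℤ → ℂ) this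
  simp only [Pi.one_apply, mul_one]
  rw [Nat.sum_divisorsAntidiagonal (fun d _ ↦ qc l (d : ZMod l))]
  rw [Int.cast_natCast] at h2
  simp only [icount] at h2
  rw [h2, Int.cast_sum]
  exact Finset.sum_congr rfl fun d _ ↦ (qc_apply l _).symm

theorem class_formula (l : ℕ) [Fact l.Prime] (hl : l.Prime) (h4 : l % 4 = 3) (h7 : 7 ≤ l) :
    (classNumSqrtNeg l : ℤ) * l = |sumS l| := by
  have hne : qc l ≠ 1 := qc_ne_one l (by omega)
  have t1 := NumberField.tendsto_sub_one_mul_dedekindZeta_nhdsGT ℚ⟮sqrtNeg l⟯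
  have t2 : Tendsto (fun s : ℝ ↦ ((s : ℂ) - 1) * riemannZeta s) (𝓝[>] 1) (𝓝 1) := by
    refine riemannZeta_residue_one.comp ?_
    apply tendsto_nhdsWithin_of_tendsto_nhds_of_eventually_within
    · have : Continuous (fun s : ℝ ↦ (s : ℂ)) := by fun_prop
      have := this.tendsto 1
      simp only [ofReal_one] at this
      exact this.mono_left nhdsWithin_le_nhds
    · filter_upwards [self_mem_nhdsWithin] with s hs
      simp only [Set.mem_Ioi] at hs
      simp only [Set.mem_compl_iff, Set.mem_singleton_iff]
      exact_mod_cast hs.ne'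
  have t3 : Tendsto (fun s : ℝ ↦ DirichletCharacter.LFunction (qc l) (s : ℂ)) (𝓝[>] 1)
      (𝓝 (DirichletCharacter.LFunction (qc l) 1)) := by
    have : Continuous (fun s : ℝ ↦ DirichletCharacter.LFunction (qc l) (s : ℂ)) :=
      (DirichletCharacter.differentiable_LFunction hne).continuous.comp continuous_ofReal
    have := this.tendsto 1
    simp only [ofReal_one] at this
    exact this.mono_left nhdsWithin_le_nhds
  have t4 := t3.mul t2
  have t5 := t1.congr' (f₂ := fun s : ℝ ↦ DirichletCharacter.LFunction (qc l) (s : ℂ) * (((s : ℂ) - 1) * riemannZeta s)) (by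
    filter_upwards [self_mem_nhdsWithin] with s hs
    rw [zeta_K l h4 (by simpa using hs)]
    push_cast
    ring)
  have h := tendsto_nhds_unique t4 t5
  rw [mul_one, residue_K l hl h4 h7] at h
  have h' := congrArg norm h
  rw [norm_LFun_one l h4, norm_real, Real.norm_of_nonneg (by positivity)] at h'
  have hl0 : (0 : ℝ) < l := by exact_mod_cast hl.pos
  have hs : 0 < Real.sqrt l := Real.sqrt_pos.2 hl0
  have : ((classNumSqrtNeg l : ℤ) * l : ℝ) = |(sumS l : ℝ)| := by
    have hp := Real.pi_pos
    field_simp at h'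
    push_cast
    first | linarith | (push_cast at h'; linarith)
  exact_mod_cast this
end G16

open Complex Polynomial IntermediateField
namespace G16

/-- existence of a place over p -/
lemma exists_val (p : ℕ) (hp : p.Prime) : ∃ V : ValuationSubring ℂ, V.valuation (p : ℂ) < 1 := by
  let A : Subring ℂ := (Int.castRingHom ℂ).range
  let I : Ideal A := Ideal.span {(p : A)}
  have hI : I ≠ ⊤ := by
    intro h
    rw [Ideal.span_singleton_eq_top, isUnit_iff_exists_inv] at h
    obtain ⟨⟨b, n, hn⟩, hb⟩ := h
    have h1 := congrArg (Subtype.val) hb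
    simp only [Subring.coe_mul, Subring.coe_one] at h1
    have h2 : ((p * n : ℤ) : ℂ) = (1 : ℤ) := by
      rw [← hn] at h1; simpa using h1
    have h3 : (p : ℤ) * n = 1 := by exact_mod_cast h2
    have h4 : (p : ℤ) ∣ 1 := ⟨n, h3.symm⟩
    have h5 : p ∣ 1 := by exact_mod_cast h4
    exact hp.one_lt.ne' (Nat.dvd_one.1 h5)
  obtain ⟨V, h1, h2⟩ := Ideal.image_subset_nonunits_valuationSubring I hI
  refine ⟨V, ?_⟩
  rw [← ValuationSubring.mem_nonunits_iff]
  exact h2 ⟨(p : A), Ideal.subset_span rfl, by simp⟩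

section
variable {V : ValuationSubring ℂ} 

lemma val_int {x : ℂ} (hx : IsIntegral ℤ x) : V.valuation x ≤ 1 := by
  rw [ValuationSubring.valuation_le_one_iff]
  have h : IsIntegral V x := hx.tower_top
  obtain ⟨y, hy⟩ := IsIntegrallyClosed.isIntegral_iff.1 h
  rw [← hy]; exact y.2

lemma val_rou {x : ℂ} {n : ℕ} (hn : n ≠ 0) (hx : x ^ n = 1) : V.valuation x = 1 := by
  have := congrArg V.valuation hx
  rw [map_pow, map_one] at this
  exact (pow_eq_one_iff.1 this).resolve_right hn

variable {p : ℕ} 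

lemma val_coprime (hp : p.Prime) (hV : V.valuation (p : ℂ) < 1) {n : ℤ} (hn : ¬ (p : ℤ) ∣ n) :
    V.valuation (n : ℂ) = 1 := by
  have hc : IsCoprime (p : ℤ) n := (Int.isCoprime_iff_gcd_eq_one).2 (by
    have := (Nat.prime_iff_prime_int.1 hp).coprime_iff_not_dvd.2 hn
    exact Int.isCoprime_iff_gcd_eq_one.1 this)
  obtain ⟨u, v, huv⟩ := hc
  apply le_antisymm (val_int (isIntegral_algebraMap (R := ℤ) (A := ℂ) (x := n)))
  by_contra! h
  have h1 : V.valuation (((u * p + v * n : ℤ)) : ℂ) < 1 := by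
    push_cast
    refine lt_of_le_of_lt (Valuation.map_add _ _ _) (max_lt ?_ ?_)
    · rw [map_mul]
      exact mul_lt_one_of_nonneg_of_lt_one_right (val_int (isIntegral_algebraMap (R := ℤ) (A := ℂ) (x := u))) zero_le hV
    · rw [map_mul]
      exact mul_lt_one_of_nonneg_of_lt_one_right (val_int (isIntegral_algebraMap (R := ℤ) (A := ℂ) (x := v))) zero_le h
  rw [huv] at h1
  simp at h1

lemma val_p_ne (hp : p.Prime) : V.valuation (p : ℂ) ≠ 0 := by
  rw [Valuation.ne_zero_iff]; exact_mod_cast hp.ne_zero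

lemma dvd_of_val (hp : p.Prime) (hV : V.valuation (p : ℂ) < 1) {n : ℤ} {e : ℕ}
    (h : V.valuation (n : ℂ) ≤ V.valuation (p : ℂ) ^ e) : (p : ℤ) ^ e ∣ n := by
  induction e generalizing n with
  | zero => simp
  | succ e ih =>
    have hd : (p : ℤ) ∣ n := by
      by_contra hn
      rw [val_coprime hp hV hn] at h
      exact absurd h (not_le.2 (pow_lt_one₀ zero_le hV (by omega)))
    obtain ⟨m, rfl⟩ := hd
    rw [pow_succ', ]
    apply mul_dvd_mul_left
    apply ih
    push_cast at h
    rw [map_mul, pow_succ'] at h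
    exact (mul_le_mul_iff_right₀ (zero_lt_iff.2 (val_p_ne hp))).1 h

/-- p-power roots of unity are congruent to 1 -/
lemma val_rou_sub (hp : p.Prime) (hV : V.valuation (p : ℂ) < 1) {x : ℂ} {r : ℕ} (hx : x ^ p ^ r = 1) :
    V.valuation (x - 1) < 1 := by
  have hx1 : IsIntegral ℤ x := ⟨X ^ p ^ r - 1, monic_X_pow_sub_C 1 (pow_ne_zero _ hp.ne_zero), by simp [hx]⟩
  have := Fact.mk hp
  have key : ∀ s (y : ℂ), IsIntegral ℤ y → V.valuation (y ^ p ^ s - 1) < 1 → V.valuation (y - 1) < 1 := by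
    intro s
    induction s with
    | zero => intro y _ h; simpa using h
    | succ s ih =>
      intro y hy h
      rw [pow_succ', pow_mul] at h
      have h2 := ih _ (hy.pow p) h
      -- (y-1)^p = y^p - 1 + p * stuff
      obtain ⟨P, hP⟩ : ∃ P : ℤ[X], (X - 1) ^ p = X ^ p - 1 + C (p : ℤ) * P := by
        have : C (p : ℤ) ∣ (X - 1 : ℤ[X]) ^ p - (X ^ p - 1) := by
          rw [C_dvd_iff_dvd_coeff]
          intro i
          have h0 : (((X - 1 : ℤ[X]) ^ p - (X ^ p - 1)).map (Int.castRingHom (ZMod p))) = 0 := by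
            simp only [Polynomial.map_sub, Polynomial.map_pow, map_X, Polynomial.map_one]
            rw [sub_pow_char]; simp
          have h1 := congrArg (fun Q ↦ Polynomial.coeff Q i) h0
          simp only [coeff_map, coeff_zero, eq_intCast] at h1
          exact (ZMod.intCast_zmod_eq_zero_iff_dvd _ _).1 h1
        obtain ⟨P, hP⟩ := this
        exact ⟨P, by rw [← hP]; ring⟩
      have h3 := congrArg (aeval y) hP
      simp only [map_pow, map_sub, aeval_X, map_one, map_add, map_mul, aeval_C] at h3
      have h4 : V.valuation ((y - 1) ^ p) < 1 := by
        rw [h3]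
        refine lt_of_le_of_lt (Valuation.map_add _ _ _) (max_lt h2 ?_)
        rw [map_mul]
        refine mul_lt_one_of_nonneg_of_lt_one_left zero_le (by simpa using hV) (val_int ?_)
        have : aeval y P ∈ Algebra.adjoin ℤ {y} := aeval_mem_adjoin_singleton ℤ y
        exact adjoin_le_integralClosure hy this
      rw [map_pow] at h4
      by_contra! h5
      exact absurd h4 (not_lt.2 (one_le_pow₀ h5))
  exact key r x hx1 (by simp [hx])
end
end G16

open Complex Polynomial IntermediateField
namespace G16
section
variable (p : ℕ) [Fact p.Prime] (F : Type) [Field F] [Fintype F] [Algebra (ZMod p) F]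

noncomputable def psi : AddChar F ℂ :=
  (ZMod.stdAddChar (N := p)).compAddMonoidHom (Algebra.trace (ZMod p) F).toAddMonoidHom

variable {F}
lemma psi_std (x : F) : psi p F x = ZMod.stdAddChar (Algebra.trace (ZMod p) F x) := rfl

lemma std_eq (j : ZMod p) : ZMod.stdAddChar j = zetaP p ^ j.val := by
  rw [ZMod.stdAddChar_apply, ZMod.toCircle_apply, zetaP, ← Complex.exp_nat_mul]
  congr 1
  push_cast
  ring

lemma psi_apply (x : F) : psi p F x = zetaP p ^ (Algebra.trace (ZMod p) F x).val := by
  rw [psi_std, std_eq]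

lemma zetaP_prim : IsPrimitiveRoot (zetaP p) p := 
  Complex.isPrimitiveRoot_exp p (NeZero.ne p)

lemma gaussSumN_eq (χ : MulChar F ℂ) (n : ℕ) : gaussSumN p χ n = gaussSum (χ ^ n) (psi p F) := by
  classical
  unfold gaussSumN gaussSum
  simp only [psi_apply]
  rw [Finset.sum_filter]
  apply Finset.sum_congr
  · rfl
  intro x _
  split_ifs with h
  · rfl
  · push Not at h
    subst h
    rw [MulChar.map_zero, zero_mul]

lemma psi_ne_one : psi p F ≠ 1 := by
  intro h
  obtain ⟨x, hx⟩ := Algebra.trace_surjective (ZMod p) F 1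
  have h1 := DFunLike.congr_fun h x
  rw [psi_std, hx, AddChar.one_apply] at h1
  have h2 : ZMod.stdAddChar (1 : ZMod p) = ZMod.stdAddChar (0 : ZMod p) := by
    rw [h1, AddChar.map_zero_eq_one]
  exact one_ne_zero (ZMod.injective_stdAddChar h2)

lemma psi_prim : (psi p F).IsPrimitive := AddChar.IsPrimitive.of_ne_one (psi_ne_one p)

lemma psi_frob (x : F) : psi p F (x ^ p) = psi p F x := by
  rw [psi_std, psi_std]
  congr 1
  have := Algebra.trace_eq_of_algEquiv (FiniteField.frobeniusAlgEquivOfAlgebraic (ZMod p) F) x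
  simpa using this

lemma gauss_frob (χ : MulChar F ℂ) : gaussSum (χ ^ p) (psi p F) = gaussSum χ (psi p F) := by
  unfold gaussSum
  have hp := (Fact.out : p.Prime)
  rw [← (FiniteField.frobeniusAlgEquivOfAlgebraic (ZMod p) F).toEquiv.sum_comp (fun x ↦ χ x * psi p F x)]
  refine Finset.sum_congr rfl fun x _ ↦ ?_
  have : (FiniteField.frobeniusAlgEquivOfAlgebraic (ZMod p) F).toEquiv x = x ^ p := by simp
  rw [this, psi_frob, MulChar.pow_apply' χ hp.ne_zero, map_pow]

lemma char_pow_card (χ : MulChar F ℂ) {x : F} (hx : x ≠ 0) : χ x ^ (Fintype.card F - 1) = 1 := by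
  rw [← map_pow, FiniteField.pow_card_sub_one_eq_one x hx, map_one]

lemma char_int (χ : MulChar F ℂ) (x : F) : IsIntegral ℤ (χ x) := by
  by_cases hx : x = 0
  · rw [hx, MulChar.map_zero]; exact isIntegral_zero
  · have h1 : 1 < Fintype.card F := Fintype.one_lt_card
    exact IsIntegral.of_pow (n := Fintype.card F - 1) (by omega) (by rw [char_pow_card χ hx]; exact isIntegral_one)

lemma zetaP_int : IsIntegral ℤ (zetaP p) := (zetaP_prim p).isIntegral (NeZero.pos p)

lemma gauss_int (χ : MulChar F ℂ) : IsIntegral ℤ (gaussSum χ (psi p F)) := by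
  unfold gaussSum
  refine IsIntegral.sum _ fun x _ ↦ (char_int χ x).mul ?_
  rw [psi_apply]
  exact (zetaP_int p).pow _

lemma jacobi_int (χ φ : MulChar F ℂ) : IsIntegral ℤ (jacobiSum χ φ) := by
  unfold jacobiSum
  exact IsIntegral.sum _ fun x _ ↦ (char_int χ x).mul (char_int φ _)

lemma val_gauss_mul {V : ValuationSubring ℂ} {χ : MulChar F ℂ} (hχ : χ ≠ 1) :
    V.valuation (gaussSum χ (psi p F)) * V.valuation (gaussSum χ⁻¹ (psi p F)) =
      V.valuation (Fintype.card F : ℂ) := by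
  have h := gaussSum_mul_gaussSum_eq_card hχ (psi_prim p (F := F))
  have h2 := mul_gaussSum_inv_eq_gaussSum χ⁻¹ (psi p F)
  have h3 : V.valuation (χ⁻¹ (-1)) = 1 := by
    apply val_rou (n := 2) (by norm_num)
    rw [← map_pow]; simp
  rw [← h, map_mul, ← h2, map_mul, h3, one_mul]

end
end G16

open Complex Polynomial IntermediateField
namespace G16
open IsLocalRing
lemma exists_teich {V : ValuationSubring ℂ} (p : ℕ) [Fact p.Prime] (hV : V.valuation (p : ℂ) < 1)
    (F : Type) [Field F] [Fintype F] [Algebra (ZMod p) F] (f : ℕ) (hf : f ≠ 0)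
    (hcard : Fintype.card F = p ^ f) (g : Fˣ) (hg : ∀ x, x ∈ Subgroup.zpowers g) :
    ∃ (σ : F →+* ResidueField V) (ω : MulChar F ℂ),
      (∀ x, ∃ y : V, (y : ℂ) = ω x ∧ residue V y = σ x) ∧ IsPrimitiveRoot (ω g) (p ^ f - 1) := by
  classical
  have hp := (Fact.out : p.Prime)
  have hpf : 1 < p ^ f := Nat.one_lt_pow hf hp.one_lt
  set n := p ^ f - 1 with hn
  have hn0 : n ≠ 0 := by omega
  have hz : IsPrimitiveRoot (Complex.exp (2 * Real.pi * I / n)) n := Complex.isPrimitiveRoot_exp n hn0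
  set z := Complex.exp (2 * Real.pi * I / n)
  have hzV : z ∈ V := by
    rw [← ValuationSubring.valuation_le_one_iff]; exact (val_rou hn0 hz.pow_eq_one).le
  let zV : V := ⟨z, hzV⟩
  have hzV' : IsPrimitiveRoot zV n := by
    refine IsPrimitiveRoot.of_map_of_injective (f := V.subtype) ?_ Subtype.val_injective
    exact hz
  have hnu : residue V (n : V) ≠ 0 := by
    rw [residue_ne_zero_iff_isUnit, ValuationSubring.valuation_eq_one_iff]
    have : V.valuation ((n : ℤ) : ℂ) = 1 := by
      apply val_coprime hp hV
      intro h
      have h1 : p ∣ n := by exact_mod_cast h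
      have h2 : p ∣ p ^ f := dvd_pow_self p hf
      have h3 : p ∣ 1 := by
        have : p ^ f = n + 1 := by omega
        rw [this] at h2
        exact (Nat.dvd_add_right h1).1 h2
      exact hp.one_lt.ne' (Nat.dvd_one.1 h3)
    simpa using this
  have hzk : IsPrimitiveRoot (residue V zV) n := by
    rw [IsPrimitiveRoot.iff (Nat.pos_of_ne_zero hn0)]
    refine ⟨by rw [← map_pow, hzV'.pow_eq_one, map_one], ?_⟩
    intro j hj0 hjn h
    obtain ⟨m, hm⟩ : ∃ m, n = m + 1 := ⟨n - 1, by omega⟩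
    have h1 := hzV'
    rw [hm] at h1
    have h2 := congrArg (residue V) h1.prod_one_sub_pow_eq_order
    rw [map_prod] at h2
    have h3 : ∏ k ∈ Finset.range m, residue V (1 - zV ^ (k + 1)) = 0 := by
      apply Finset.prod_eq_zero (i := j - 1) (Finset.mem_range.2 (by omega))
      rw [show j - 1 + 1 = j by omega, map_sub, map_pow, h, map_one, sub_self]
    rw [h3] at h2
    apply hnu
    rw [hm, h2]; push_cast; rfl
  have : CharP (ResidueField V) p := by
    apply (CharP.charP_iff_prime_eq_zero hp).2
    have : (p : V) ∈ maximalIdeal V := by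
      rw [ValuationSubring.valuation_lt_one_iff]; simpa using hV
    rw [← map_natCast (residue V), residue_eq_zero_iff]; exact this
  let _ : Algebra (ZMod p) (ResidueField V) := ZMod.algebra _ p
  have : IsSplittingField (ZMod p) F (X ^ p ^ f - X) := FiniteField.isSplittingField_of_card_eq p f hcard
  have hs : Splits ((X ^ p ^ f - X : (ZMod p)[X]).map (algebraMap (ZMod p) (ResidueField V))) := by
    have : (X ^ p ^ f - X : (ZMod p)[X]).map (algebraMap (ZMod p) (ResidueField V)) = X * (X ^ n - 1) := by
      have : p ^ f = n + 1 := by omega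
      rw [this]; simp; ring
    rw [this]
    exact Splits.X.mul (X_pow_sub_one_splits hzk)
  let σ : F →ₐ[ZMod p] ResidueField V := IsSplittingField.lift F _ hs
  have hcu : Fintype.card Fˣ = n := by rw [Fintype.card_units, hcard]
  have hgn : (g : F) ^ n = 1 := by
    rw [hn, ← hcard]; exact FiniteField.pow_card_sub_one_eq_one _ g.ne_zero
  have : NeZero n := ⟨hn0⟩
  obtain ⟨i, hi, hi2⟩ := hzk.eq_pow_of_pow_eq_one (ξ := σ (g : F)) (by rw [← map_pow, hgn, map_one])
  have hu : IsUnit (z ^ i) := (hz.isUnit hn0).pow i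
  have hroot : hu.unit ∈ rootsOfUnity (Fintype.card Fˣ) ℂ := by
    rw [_root_.mem_rootsOfUnity, hcu]
    ext
    simp only [Units.val_pow_eq_pow_val, IsUnit.unit_spec, Units.val_one]
    rw [← pow_mul, mul_comm, pow_mul, hz.pow_eq_one, one_pow]
  let ω : MulChar F ℂ := MulChar.ofRootOfUnity hroot hg
  have hω : ω g = z ^ i := MulChar.ofRootOfUnity_spec hroot hg
  refine ⟨σ.toRingHom, ω, ?_, ?_⟩
  · intro x
    by_cases hx : x = 0
    · exact ⟨0, by rw [hx, MulChar.map_zero]; simp, by rw [hx]; simp⟩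
    · obtain ⟨m, hm⟩ := (Submonoid.mem_powers_iff _ _).1 ((mem_powers_iff_mem_zpowers).2 (hg (Units.mk0 x hx)))
      have hx' : x = (g : F) ^ m := by
        have := congrArg Units.val hm
        simpa using this.symm
      refine ⟨zV ^ (i * m), ?_, ?_⟩
      · rw [hx', map_pow, hω, ← pow_mul]; rfl
      · rw [hx']
        change _ = σ ((g : F) ^ m)
        rw [map_pow, map_pow, ← hi2, pow_mul]
  · rw [hω]
    have h1 : IsPrimitiveRoot (σ (g : F)) n := by
      refine IsPrimitiveRoot.map_of_injective (f := σ) ?_ σ.injective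
      rw [IsPrimitiveRoot.iff_orderOf, orderOf_units, orderOf_eq_card_of_forall_mem_zpowers hg, Nat.card_eq_fintype_card, hcu]
    have h2 := (hzk.pow_iff_coprime (Nat.pos_of_ne_zero hn0) i).1 (by rw [hi2]; exact h1)
    exact hz.pow_of_coprime i h2
end G16

open Complex Polynomial IntermediateField
namespace G16
open IsLocalRing

lemma one_add_pow_exp (x : ℂ) (hx : IsIntegral ℤ x) (n : ℕ) :
    ∃ R : ℂ, IsIntegral ℤ R ∧ (1 + x) ^ n = 1 + n * x + x ^ 2 * R := by
  induction n with
  | zero => exact ⟨0, isIntegral_zero, by simp⟩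
  | succ n ih =>
    obtain ⟨R, hR, h⟩ := ih
    refine ⟨n + R + x * R, ?_, ?_⟩
    · exact ((isIntegral_algebraMap (R := ℤ) (x := (n:ℤ))).add hR |>.add (hx.mul hR) : IsIntegral ℤ (((n:ℤ):ℂ) + R + x * R))
    · rw [pow_succ, h]; push_cast; ring

lemma val_zeta {V : ValuationSubring ℂ} (p : ℕ) [Fact p.Prime] :
    V.valuation (p : ℂ) ≤ V.valuation (zetaP p - 1) ^ (p - 1) := by
  have hp := (Fact.out : p.Prime)
  obtain ⟨m, hm⟩ : ∃ m, p = m + 1 := ⟨p - 1, by have := hp.pos; omega⟩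
  have h := zetaP_prim p
  have h2 : IsPrimitiveRoot (zetaP p) (m + 1) := by rw [← hm]; exact h
  have h3 := h2.prod_one_sub_pow_eq_order
  have h4 : (p : ℂ) = m + 1 := by rw [hm]; push_cast; ring
  rw [h4, ← h3, map_prod]
  have : p - 1 = (Finset.range m).card := by simp; omega
  rw [this, ← Finset.prod_const]
  refine Finset.prod_le_prod' fun i _ ↦ ?_
  have h5 : 1 - zetaP p ^ (i + 1) = (zetaP p - 1) * (- ∑ j ∈ Finset.range (i + 1), zetaP p ^ j) := by
    have := mul_geom_sum (zetaP p) (i + 1)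
    linear_combination this
  rw [h5, map_mul]
  refine mul_le_of_le_one_right' (val_int ?_)
  exact (IsIntegral.sum _ fun j _ ↦ (zetaP_int p).pow j).neg

lemma trace_sum (p : ℕ) [Fact p.Prime] 
    (F : Type) [Field F] [Fintype F] [Algebra (ZMod p) F] (f : ℕ) (hf : f ≠ 0)
    (hcard : Fintype.card F = p ^ f) :
    ∑ x : F, x⁻¹ * ((Algebra.trace (ZMod p) F x).val : F) = -1 := by
  classical
  have hp := (Fact.out : p.Prime)
  have hr : Module.finrank (ZMod p) F = f := by
    have := Module.card_eq_pow_finrank (K := ZMod p) (V := F)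
    rw [hcard, ZMod.card] at this
    exact (Nat.pow_right_injective hp.two_le this).symm
  have h1 : ∀ x : F, ((Algebra.trace (ZMod p) F x).val : F) = ∑ i ∈ Finset.range f, x ^ (p ^ i) := by
    intro x
    have := FiniteField.algebraMap_trace_eq_sum_pow (ZMod p) F x
    rw [hr, Nat.card_zmod] at this
    rw [← this]
    conv_rhs => rw [← ZMod.natCast_zmod_val (Algebra.trace (ZMod p) F x)]
    rw [map_natCast]
  simp only [h1, Finset.mul_sum]
  rw [Finset.sum_comm]
  obtain ⟨f', rfl⟩ : ∃ f', f = f' + 1 := ⟨f - 1, by omega⟩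
  rw [Finset.sum_range_succ', Finset.sum_eq_zero, zero_add]
  · simp only [pow_zero, pow_one]
    have : ∀ x : F, x⁻¹ * x = 1 - if x = 0 then 1 else 0 := by
      intro x
      split_ifs with h
      · simp [h]
      · simp [h]
    simp [this]
  · intro i hi
    have h2 : 1 < p ^ (i + 1) := Nat.one_lt_pow (by omega) hp.one_lt
    have h3 : p ^ (i + 1) < p ^ (f' + 1) := Nat.pow_lt_pow_right hp.one_lt (by have := Finset.mem_range.1 hi; omega)
    rw [← FiniteField.sum_pow_lt_card_sub_one F (p ^ (i + 1) - 1) (by rw [hcard]; omega)]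
    refine Finset.sum_congr rfl fun x _ ↦ ?_
    by_cases hx : x = 0
    · rw [hx, inv_zero, zero_mul, zero_pow (by omega)]
    · rw [pow_sub₀ _ hx h2.le]; ring

lemma val_base {V : ValuationSubring ℂ} (p : ℕ) [Fact p.Prime] (hV : V.valuation (p : ℂ) < 1)
    (F : Type) [Field F] [Fintype F] [Algebra (ZMod p) F] (f : ℕ) (hf : f ≠ 0)
    (hcard : Fintype.card F = p ^ f) (σ : F →+* ResidueField V) (ω : MulChar F ℂ)
    (hω : ∀ x, ∃ y : V, (y : ℂ) = ω x ∧ residue V y = σ x) (hω1 : ω ≠ 1) :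
    V.valuation (p : ℂ) ≤ V.valuation (gaussSum ω⁻¹ (psi p F)) ^ (p - 1) := by
  have hp := (Fact.out : p.Prime)
  set π := zetaP p - 1 with hπ
  have hπi : IsIntegral ℤ π := (zetaP_int p).sub isIntegral_one
  have hπ1 : V.valuation π < 1 := val_rou_sub hp hV (r := 1) (by rw [pow_one]; exact (zetaP_prim p).pow_eq_one)
  have hπ0 : V.valuation π ≠ 0 := by
    rw [Valuation.ne_zero_iff]
    intro h
    exact (zetaP_prim p).ne_one hp.one_lt (sub_eq_zero.1 h)
  choose R hR hR2 using one_add_pow_exp π hπi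
  set n : F → ℕ := fun x ↦ (Algebra.trace (ZMod p) F x).val with hn
  set A := ∑ x : F, ω⁻¹ x * n x with hA
  set B := ∑ x : F, ω⁻¹ x * R (n x) with hB
  have hG : gaussSum ω⁻¹ (psi p F) = π * A + π ^ 2 * B := by
    have h0 : ∑ x : F, ω⁻¹ x = 0 := MulChar.sum_eq_zero_of_ne_one (inv_ne_one.2 hω1)
    have : ∀ x, ω⁻¹ x * psi p F x = ω⁻¹ x + π * (ω⁻¹ x * n x) + π ^ 2 * (ω⁻¹ x * R (n x)) := by
      intro x
      have e : zetaP p = 1 + π := by rw [hπ]; ring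
      rw [psi_apply, e, hR2]; ring
    unfold gaussSum
    rw [Finset.sum_congr rfl fun x _ ↦ this x, Finset.sum_add_distrib, Finset.sum_add_distrib, h0,
      ← Finset.mul_sum, ← Finset.mul_sum, zero_add]
  have hBi : V.valuation B ≤ 1 := val_int (IsIntegral.sum _ fun x _ ↦ (char_int _ x).mul (hR _))
  choose y hy hy2 using hω
  have hA2 : A = ((∑ x : F, y x⁻¹ * (n x : V) : V) : ℂ) := by
    rw [hA]; push_cast
    refine Finset.sum_congr rfl fun x _ ↦ ?_
    rw [MulChar.inv_apply', hy]
  have hA1 : V.valuation A = 1 := by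
    rw [hA2, ← ValuationSubring.valuation_eq_one_iff, ← residue_ne_zero_iff_isUnit, map_sum]
    have : ∀ x, residue V (y x⁻¹ * (n x : V)) = σ (x⁻¹ * (n x : F)) := by
      intro x; rw [map_mul, hy2, map_natCast, map_mul, map_natCast]
    rw [Finset.sum_congr rfl fun x _ ↦ this x, ← map_sum, trace_sum p F f hf hcard]
    simp
  have hGv : V.valuation (gaussSum ω⁻¹ (psi p F)) = V.valuation π := by
    rw [hG, Valuation.map_add_eq_of_lt_left]
    · rw [map_mul, hA1, mul_one]
    · rw [map_mul, map_mul, hA1, mul_one, map_pow, sq]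
      calc V.valuation π * V.valuation π * V.valuation B ≤ V.valuation π * V.valuation π := mul_le_of_le_one_right' hBi
        _ < V.valuation π * 1 := (mul_lt_mul_iff_right₀ (zero_lt_iff.2 hπ0)).2 hπ1
        _ = _ := mul_one _
  rw [hGv]
  exact val_zeta p
end G16

open Complex Polynomial IntermediateField
namespace G16

def SS (p f a : ℕ) : ℕ := ∑ i ∈ Finset.range f, (p ^ i * a) % (p ^ f - 1)

lemma mod_formula {p f a i : ℕ} (hp : 1 < p) (ha : a < p ^ f - 1) (hi : i < f) :
    (p ^ i * a) % (p ^ f - 1) + (p ^ f - 1) * (a / p ^ (f - i)) = p ^ i * a := by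
  have h1 : p ^ f = p ^ i * p ^ (f - i) := by rw [← pow_add]; congr 1; omega
  have hpos : 0 < p ^ (f - i) := by positivity
  have hposi : 0 < p ^ i := by positivity
  set Q := a / p ^ (f - i) with hQ
  set R := a % p ^ (f - i) with hR
  have haQ : p ^ (f - i) * Q + R = a := Nat.div_add_mod a _
  have hRlt : R < p ^ (f - i) := Nat.mod_lt _ hpos
  have hQlt : Q < p ^ i := by
    rw [hQ, Nat.div_lt_iff_lt_mul hpos, ← h1]; omega
  have h2 : p ^ i * a = (p ^ f - 1) * Q + (Q + p ^ i * R) := by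
    have : p ^ f = (p ^ f - 1) + 1 := by omega
    have e : p ^ i * a = p ^ f * Q + p ^ i * R := by rw [← haQ, h1]; ring
    rw [e]; nth_rewrite 1 [this]; ring
  have h3 : Q + p ^ i * R < p ^ f - 1 := by
    have h4 : p ^ i * (R + 1) ≤ p ^ f := by rw [h1]; exact Nat.mul_le_mul_left _ hRlt
    have h5 : Q + p ^ i * R ≤ p ^ f - 1 := by rw [mul_add] at h4; omega
    refine lt_of_le_of_ne h5 fun h ↦ ?_
    have h6 : Q = p ^ i - 1 ∧ p ^ i * (R + 1) = p ^ f := by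
      rw [mul_add] at h4 ⊢; constructor <;> omega
    have h7 : R + 1 = p ^ (f - i) := by
      have := h6.2; rw [h1] at this; exact Nat.eq_of_mul_eq_mul_left hposi this
    have : a = p ^ f - 1 := by
      rw [← haQ, h6.1, h1, ← h7]
      obtain ⟨c, hc⟩ : ∃ c, p ^ i = c + 1 := ⟨p ^ i - 1, by omega⟩
      rw [hc]
      have : (c + 1) * (R + 1) = (R + 1) * c + R + 1 := by ring
      rw [this]; simp
    omega
  rw [h2, Nat.mul_add_mod, Nat.mod_eq_of_lt h3]; ring

lemma SS_succ {p f a : ℕ} (hp : 1 < p) (ha : a + 1 < p ^ f - 1) (hpa : ¬ p ∣ a + 1) :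
    SS p f (a + 1) = SS p f a + ∑ i ∈ Finset.range f, p ^ i := by
  unfold SS
  rw [← Finset.sum_add_distrib]
  refine Finset.sum_congr rfl fun i hi ↦ ?_
  have hi := Finset.mem_range.1 hi
  have h1 := mod_formula hp ha hi
  have h2 := mod_formula (a := a) hp (by omega) hi
  have h3 : (a + 1) / p ^ (f - i) = a / p ^ (f - i) := by
    rw [Nat.succ_div, if_neg, add_zero]
    intro h
    exact hpa ((dvd_pow_self p (by omega)).trans h)
  rw [h3] at h1
  rw [mul_add] at h1 ⊢
  omega

lemma SS_mul {p f b : ℕ} (hp : 1 < p) : SS p f (p * b) = SS p f b := by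
  unfold SS
  have h := Finset.sum_range_succ (fun i ↦ (p ^ i * b) % (p ^ f - 1)) f
  rw [Finset.sum_range_succ'] at h
  have h1 : (p ^ f * b) % (p ^ f - 1) = (p ^ 0 * b) % (p ^ f - 1) := by
    have h0 : 0 < p ^ f := by positivity
    have : p ^ f * b = (p ^ f - 1) * b + p ^ 0 * b := by
      obtain ⟨c, hc⟩ : ∃ c, p ^ f = c + 1 := ⟨p ^ f - 1, by omega⟩
      rw [hc]; simp; ring
    rw [this, Nat.mul_add_mod]
  rw [h1] at h
  have h2 := Nat.add_right_cancel h
  rw [← h2]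
  refine Finset.sum_congr rfl fun i _ ↦ ?_
  congr 1; ring

lemma SS_compl {p f a : ℕ} (hp : 1 < p) (hf : f ≠ 0) (ha0 : 0 < a) (ha : a < p ^ f - 1) :
    SS p f a + SS p f (p ^ f - 1 - a) = f * (p ^ f - 1) := by
  unfold SS
  rw [← Finset.sum_add_distrib]
  have : ∀ i ∈ Finset.range f, (p ^ i * a) % (p ^ f - 1) + (p ^ i * (p ^ f - 1 - a)) % (p ^ f - 1) = p ^ f - 1 := by
    intro i _
    have h0 : (p ^ i * a) % (p ^ f - 1) ≠ 0 := by
      intro h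
      have h1 := Nat.dvd_of_mod_eq_zero h
      have hc : Nat.Coprime (p ^ f - 1) (p ^ i) := by
        apply Nat.Coprime.pow_right
        have h3 : Nat.Coprime (p ^ f - 1) (p ^ f) := by
          have h4 : p ^ f = (p ^ f - 1) + 1 := by omega
          nth_rewrite 2 [h4]
          simp
        exact h3.coprime_dvd_right (dvd_pow_self p hf)
      have h2 := Nat.le_of_dvd ha0 (hc.dvd_of_dvd_mul_left h1)
      omega
    have hs : p ^ i * a + p ^ i * (p ^ f - 1 - a) = (p ^ f - 1) * p ^ i := by
      rw [← mul_add, Nat.add_sub_cancel' ha.le, mul_comm]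
    set m := p ^ f - 1
    have hm : 0 < m := by omega
    set x := p ^ i * a
    set y := p ^ i * (m - a)
    have h1 : (x % m + y % m) % m = 0 := by rw [← Nat.add_mod, hs]; simp
    have h2 := Nat.mod_lt x hm
    have h3 := Nat.mod_lt y hm
    obtain ⟨c, hc⟩ := Nat.dvd_of_mod_eq_zero h1
    have : c = 1 := by
      have h5 : c < 2 := by
        by_contra! h
        have := Nat.mul_le_mul_left m h
        omega
      interval_cases c
      · omega
      · rfl
    rw [hc, this, mul_one]
  rw [Finset.sum_congr rfl this, Finset.sum_const, Finset.card_range, smul_eq_mul]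

open IsLocalRing
lemma stick_le {V : ValuationSubring ℂ} (p : ℕ) [Fact p.Prime] 
    (F : Type) [Field F] [Fintype F] [Algebra (ZMod p) F] (f : ℕ) (hf : f ≠ 0) 
    (ω : MulChar F ℂ) (hne : ∀ a, 0 < a → a < p ^ f - 1 → ω⁻¹ ^ a ≠ 1)
    (hb : V.valuation (p : ℂ) ≤ V.valuation (gaussSum ω⁻¹ (psi p F)) ^ (p - 1)) (a : ℕ) (ha : a < p ^ f - 1) :
    V.valuation (p : ℂ) ^ SS p f a ≤ V.valuation (gaussSum (ω⁻¹ ^ a) (psi p F)) ^ (p ^ f - 1) := by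
  have hp := (Fact.out : p.Prime)
  have hgeo : (p - 1) * ∑ i ∈ Finset.range f, p ^ i = p ^ f - 1 := by
    rw [mul_comm, Nat.geomSum_eq hp.two_le]
    exact Nat.div_mul_cancel (Nat.sub_one_dvd_pow_sub_one p f)
  have hb2 : V.valuation (p : ℂ) ^ (∑ i ∈ Finset.range f, p ^ i) ≤
      V.valuation (gaussSum ω⁻¹ (psi p F)) ^ (p ^ f - 1) := by
    rw [← hgeo, pow_mul]
    exact pow_le_pow_left₀ zero_le hb _
  induction a using Nat.strong_induction_on with
  | _ a ih =>
  rcases Nat.eq_zero_or_pos a with rfl | h0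
  · have h1 : SS p f 0 = 0 := by simp [SS]
    rw [pow_zero, h1, pow_zero, gaussSum_one_left (psi_ne_one p)]
    simp
  by_cases hd : p ∣ a
  · obtain ⟨b, rfl⟩ := hd
    have hb0 : 0 < b := Nat.pos_of_mul_pos_left h0
    have hlt : b < p * b := by nlinarith [hp.two_le]
    rw [SS_mul hp.one_lt, mul_comm p b, pow_mul, gauss_frob]
    exact ih b hlt (hlt.trans ha)
  · obtain ⟨c, rfl⟩ : ∃ c, a = c + 1 := ⟨a - 1, by omega⟩
    rw [SS_succ hp.one_lt ha hd, pow_add]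
    have hj := jacobiSum_mul_nontrivial (χ := ω⁻¹ ^ c) (φ := ω⁻¹) (by rw [← pow_succ]; exact hne _ h0 ha) (psi p F)
    rw [← pow_succ] at hj
    have hv : V.valuation (gaussSum (ω⁻¹ ^ c) (psi p F)) * V.valuation (gaussSum ω⁻¹ (psi p F)) ≤
        V.valuation (gaussSum (ω⁻¹ ^ (c + 1)) (psi p F)) := by
      rw [← map_mul, ← hj, map_mul]
      exact mul_le_of_le_one_right' (val_int (jacobi_int _ _))
    calc _ ≤ V.valuation (gaussSum (ω⁻¹ ^ c) (psi p F)) ^ (p ^ f - 1) * V.valuation (gaussSum ω⁻¹ (psi p F)) ^ (p ^ f - 1) :=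
          mul_le_mul' (ih c (by omega) (by omega)) hb2
      _ ≤ _ := by rw [← mul_pow]; exact pow_le_pow_left₀ zero_le hv _

lemma stick_eq {V : ValuationSubring ℂ} (p : ℕ) [Fact p.Prime] 
    (F : Type) [Field F] [Fintype F] [Algebra (ZMod p) F] (f : ℕ) (hf : f ≠ 0) (hcard : Fintype.card F = p ^ f)
    (ω : MulChar F ℂ) (hne : ∀ a, 0 < a → a < p ^ f - 1 → ω⁻¹ ^ a ≠ 1)
    (hb : V.valuation (p : ℂ) ≤ V.valuation (gaussSum ω⁻¹ (psi p F)) ^ (p - 1)) (a : ℕ) (ha : a < p ^ f - 1) :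
    V.valuation (gaussSum (ω⁻¹ ^ a) (psi p F)) ^ (p ^ f - 1) = V.valuation (p : ℂ) ^ SS p f a := by
  classical
  have hp := (Fact.out : p.Prime)
  rcases Nat.eq_zero_or_pos a with rfl | h0
  · have h1 : SS p f 0 = 0 := by simp [SS]
    rw [pow_zero, h1, pow_zero, gaussSum_one_left (psi_ne_one p)]
    simp
  have h1 := stick_le p F f hf ω hne hb a ha
  have h2 := stick_le p F f hf ω hne hb (p ^ f - 1 - a) (by omega)
  have hinv : (ω⁻¹ ^ a)⁻¹ = ω⁻¹ ^ (p ^ f - 1 - a) := by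
    have h3 : ω⁻¹ ^ (p ^ f - 1) = 1 := by
      have h4 := MulChar.pow_card_eq_one ω⁻¹
      rwa [Fintype.card_units, hcard] at h4
    rw [inv_eq_iff_mul_eq_one, ← pow_add, Nat.add_sub_cancel' ha.le, h3]
  have h3 := val_gauss_mul p (V := V) (hne a h0 ha)
  rw [hinv, hcard] at h3
  have h4 : V.valuation (gaussSum (ω⁻¹ ^ a) (psi p F)) ^ (p ^ f - 1) *
      V.valuation (gaussSum (ω⁻¹ ^ (p ^ f - 1 - a)) (psi p F)) ^ (p ^ f - 1) =
      V.valuation (p : ℂ) ^ SS p f a * V.valuation (p : ℂ) ^ SS p f (p ^ f - 1 - a) := by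
    rw [← mul_pow, h3, ← pow_add, SS_compl hp.one_lt hf h0 ha, pow_mul]
    push_cast
    rw [map_pow]
  apply le_antisymm _ h1
  by_contra! h
  have hpos : ∀ n : ℕ, 0 < V.valuation (p : ℂ) ^ n := fun n ↦ zero_lt_iff.2 (pow_ne_zero _ (val_p_ne hp))
  have h5 := (mul_lt_mul_iff_left₀ (hpos (SS p f (p ^ f - 1 - a)))).2 h
  have h6 := mul_le_mul_right h2 (V.valuation (gaussSum (ω⁻¹ ^ a) (psi p F)) ^ (p ^ f - 1))
  rw [h4] at h6
  exact lt_irrefl _ (h5.trans_le h6)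
end G16

open Complex Polynomial IntermediateField
namespace G16
open IsLocalRing
theorem stick {V : ValuationSubring ℂ} (p : ℕ) [Fact p.Prime] (hV : V.valuation (p : ℂ) < 1)
    (F : Type) [Field F] [Fintype F] [Algebra (ZMod p) F] (f : ℕ) (hf : f ≠ 0) (hcard : Fintype.card F = p ^ f)
    (N : ℕ) (hN : 1 < N) (χ : MulChar F ℂ) (hχ : orderOf χ = N) :
    ∃ k : ℕ, k.Coprime N ∧ ∀ m : ℕ, V.valuation (gaussSum (χ ^ m) (psi p F)) ^ N =
      V.valuation (p : ℂ) ^ (∑ i ∈ Finset.range f, (p ^ i * (k * m)) % N) := by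
  classical
  have hp := (Fact.out : p.Prime)
  obtain ⟨g, hg⟩ := IsCyclic.exists_generator (α := Fˣ)
  obtain ⟨σ, ω, hω, hprim⟩ := exists_teich p hV F f hf hcard g hg
  have hpf : 1 < p ^ f := Nat.one_lt_pow hf hp.one_lt
  have hcu : Fintype.card Fˣ = p ^ f - 1 := by rw [Fintype.card_units, hcard]
  have hdvd : N ∣ p ^ f - 1 := by
    rw [← hχ, ← hcu]; exact orderOf_dvd_of_pow_eq_one (MulChar.pow_card_eq_one χ)
  obtain ⟨M, hM⟩ := hdvd
  have hM0 : 0 < M := by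
    rcases Nat.eq_zero_or_pos M with h | h
    · rw [h] at hM; omega
    · exact h
  have hginv : ω⁻¹ (g : F) = (ω g)⁻¹ := MulChar.inv_apply_eq_inv' ω _
  have hprim' : IsPrimitiveRoot (ω⁻¹ (g : F)) (p ^ f - 1) := by rw [hginv]; exact hprim.inv
  have hpowg : ∀ (φ : MulChar F ℂ) (j : ℕ), (φ ^ j) (g : F) = φ g ^ j := fun φ j ↦ MulChar.pow_apply_coe φ j g
  have hone : ∀ j, ω⁻¹ ^ j = 1 ↔ p ^ f - 1 ∣ j := by
    intro j
    rw [MulChar.eq_iff hg, hpowg, MulChar.one_apply_coe, hprim'.pow_eq_one_iff_dvd]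
  have hne : ∀ a, 0 < a → a < p ^ f - 1 → ω⁻¹ ^ a ≠ 1 := by
    intro a h0 h1 h
    exact absurd (Nat.le_of_dvd h0 ((hone a).1 h)) (by omega)
  have hω1 : ω ≠ 1 := by
    rintro rfl
    have := (hone 1).1 (by simp)
    have := Nat.le_of_dvd one_pos this
    have : N * M ≥ N * 1 := Nat.mul_le_mul_left _ hM0
    omega
  have hb := val_base p hV F f hf hcard σ ω hω hω1
  have hst := stick_eq p F f hf hcard ω hne hb
  have : NeZero (p ^ f - 1) := ⟨by omega⟩
  obtain ⟨j, -, hj⟩ := hprim'.eq_pow_of_pow_eq_one (ξ := χ (g : F)) (by rw [← hcard]; exact char_pow_card χ g.ne_zero)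
  have hχj : χ = ω⁻¹ ^ j := by rw [MulChar.eq_iff hg, hpowg, hj]
  have hjM : M ∣ j := by
    have : χ ^ N = 1 := by rw [← hχ]; exact pow_orderOf_eq_one χ
    rw [hχj, ← pow_mul, hone, hM, mul_comm j N] at this
    exact Nat.dvd_of_mul_dvd_mul_left (by omega) this
  obtain ⟨k, rfl⟩ := hjM
  refine ⟨k, ?_, ?_⟩
  · by_contra hc
    set d := k.gcd N with hd
    have hd0 : 0 < d := Nat.gcd_pos_of_pos_right _ (by omega)
    obtain ⟨N', hN'⟩ : d ∣ N := Nat.gcd_dvd_right _ _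
    obtain ⟨k', hk'⟩ : d ∣ k := Nat.gcd_dvd_left _ _
    have hN'0 : 0 < N' := by
      rcases Nat.eq_zero_or_pos N' with h | h
      · rw [h] at hN'; omega
      · exact h
    have h1 : χ ^ N' = 1 := by
      rw [hχj, ← pow_mul, hone, hM]
      refine ⟨k', ?_⟩
      calc M * k * N' = M * (d * k') * N' := by rw [← hk']
        _ = (d * N') * M * k' := by ring
        _ = _ := by rw [← hN']
    have h2 := Nat.le_of_dvd hN'0 (orderOf_dvd_of_pow_eq_one h1)
    rw [hχ, hN'] at h2
    have h3 : 2 ≤ d := by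
      have : d ≠ 1 := hc
      omega
    nlinarith
  · intro m
    set a := M * ((k * m) % N) with ha
    have halt : a < p ^ f - 1 := by
      rw [hM, mul_comm N M]
      exact (Nat.mul_lt_mul_left hM0).2 (Nat.mod_lt _ (by omega))
    have hχm : χ ^ m = ω⁻¹ ^ a := by
      rw [hχj, ← pow_mul]
      have : M * k * m = a + (p ^ f - 1) * ((k * m) / N) := by
        rw [ha, hM, mul_assoc M k m]
        nth_rewrite 1 [← Nat.mod_add_div (k * m) N]
        ring
      rw [this, pow_add, (hone _).2 (dvd_mul_right _ _), mul_one]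
    have h := hst a halt
    rw [← hχm] at h
    have hS : SS p f a = M * ∑ i ∈ Finset.range f, (p ^ i * (k * m)) % N := by
      unfold SS
      rw [Finset.mul_sum]
      refine Finset.sum_congr rfl fun i _ ↦ ?_
      rw [ha, hM, mul_comm N M, show p ^ i * (M * (k * m % N)) = M * (p ^ i * (k * m % N)) by ring,
        Nat.mul_mod_mul_left]
      congr 1
      rw [Nat.mul_mod, Nat.mod_mod, ← Nat.mul_mod]
    rw [hS, hM, pow_mul, mul_comm M, pow_mul] at h
    exact (pow_left_inj₀ zero_le zero_le hM0.ne').1 h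
end G16

open Complex Polynomial IntermediateField

namespace G16

/-- the quadratic character on naturals -/
noncomputable def eta (l : ℕ) [Fact l.Prime] (n : ℕ) : ℤ := quadraticChar (ZMod l) (n : ZMod l)

section
variable (l : ℕ) [Fact l.Prime]

lemma eta_mul (m n : ℕ) : eta l (m * n) = eta l m * eta l n := by
  unfold eta; rw [Nat.cast_mul, map_mul]

lemma eta_pow (m n : ℕ) : eta l (m ^ n) = eta l m ^ n := by
  unfold eta; rw [Nat.cast_pow, map_pow]

lemma eta_mod (r : ℕ) (hr : 1 ≤ r) (n : ℕ) : eta l (n % l ^ r) = eta l n := by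
  unfold eta
  congr 1
  rw [ZMod.natCast_eq_natCast_iff]
  exact (Nat.mod_modEq n (l ^ r)).of_dvd (dvd_pow_self l (by omega))

lemma eta_zero_iff (n : ℕ) : eta l n = 0 ↔ l ∣ n := by
  unfold eta
  rw [quadraticChar_eq_zero_iff, ZMod.natCast_eq_zero_iff]

lemma eta_sq (n : ℕ) (hn : ¬ l ∣ n) : eta l n ^ 2 = 1 := by
  refine quadraticChar_sq_one ?_
  rwa [Ne, ZMod.natCast_eq_zero_iff]

lemma eta_pm (n : ℕ) (hn : ¬ l ∣ n) : eta l n = 1 ∨ eta l n = -1 := by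
  exact sq_eq_one_iff.mp (eta_sq l n hn)

lemma eta_sub (h4 : l % 4 = 3) (r : ℕ) (hr : 1 ≤ r) (n : ℕ) (hn : n ≤ l ^ r) :
    eta l (l ^ r - n) = - eta l n := by
  unfold eta
  rw [Nat.cast_sub hn]
  have : ((l ^ r : ℕ) : ZMod l) = 0 := by
    rw [ZMod.natCast_eq_zero_iff]; exact dvd_pow_self l (by omega)
  rw [this, zero_sub, neg_eq_neg_one_mul, map_mul, quad_neg_one l h4]
  ring

/-- reflection `n ↦ N - n` for functions supported on multiples-free -/
lemma sum_reflect {M : Type*} [AddCommMonoid M] (N : ℕ) (g : ℕ → M) (h0 : g 0 = 0) (hN : g N = 0) :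
    ∑ n ∈ Finset.range N, g (N - n) = ∑ n ∈ Finset.range N, g n := by
  have h1 : ∑ n ∈ Finset.range (N + 1), g (N - n) = ∑ n ∈ Finset.range (N + 1), g n := by
    have := Finset.sum_range_reflect g (N + 1)
    simpa using this
  rw [Finset.sum_range_succ, Finset.sum_range_succ] at h1
  simpa [h0, hN] using h1

lemma card_eta_sq (r : ℕ) (hr : 1 ≤ r) :
    ∑ n ∈ Finset.range (l ^ r), eta l n ^ 2 = (Nat.totient (l ^ r) : ℤ) := by
  rw [Nat.totient, Finset.card_filter]
  push_cast
  refine Finset.sum_congr rfl fun n _ => ?_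
  have hl : l.Prime := Fact.out
  by_cases h : l ∣ n
  · have : ¬ (l ^ r).Coprime n := by
      rw [Nat.coprime_pow_left_iff (by omega), Nat.Prime.coprime_iff_not_dvd hl]; simpa using h
    simp [this, (eta_zero_iff l n).2 h]
  · have : (l ^ r).Coprime n := by
      rw [Nat.coprime_pow_left_iff (by omega), Nat.Prime.coprime_iff_not_dvd hl]; simpa using h
    simp [this, eta_sq l n h]

lemma sum_eta (h4 : l % 4 = 3) (r : ℕ) (hr : 1 ≤ r) :
    ∑ n ∈ Finset.range (l ^ r), eta l n = 0 := by
  have h0 : eta l 0 = 0 := (eta_zero_iff l 0).2 (dvd_zero _)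
  have hN : eta l (l ^ r) = 0 := (eta_zero_iff l _).2 (dvd_pow_self l (by omega))
  have := sum_reflect (l ^ r) (eta l) h0 hN
  rw [Finset.sum_congr rfl fun n hn => eta_sub l h4 r hr n (Finset.mem_range.1 hn).le,
    Finset.sum_neg_distrib] at this
  omega

lemma orbit (h4 : l % 4 = 3) (r : ℕ) (hr : 1 ≤ r) (p f : ℕ) (hpl : ¬ l ∣ p)
    (hf : orderOf (p : ZMod (l ^ r)) = f) (hφ : Nat.totient (l ^ r) = 2 * f) (hodd : Odd f)
    {R : Type*} [CommRing R] (g : ℕ → R) (k : ℕ) (hk : ¬ l ∣ k) :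
    2 * ∑ i ∈ Finset.range f, g ((p ^ i * k) % l ^ r) =
      ∑ n ∈ Finset.range (l ^ r), ((eta l n ^ 2 : ℤ) : R) * g n
       + (eta l k : R) * ∑ n ∈ Finset.range (l ^ r), (eta l n : R) * g n := by
  have hl : l.Prime := Fact.out
  have hNpos : 0 < l ^ r := pow_pos hl.pos r
  have hp1 : eta l p = 1 := by
    have h1 : ((p ^ f : ℕ) : ZMod (l ^ r)) = ((1 : ℕ) : ZMod (l ^ r)) := by
      push_cast; rw [← hf]; exact pow_orderOf_eq_one _
    rw [ZMod.natCast_eq_natCast_iff] at h1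
    have h2 : eta l (p ^ f) = eta l 1 := by
      rw [← eta_mod l r hr (p ^ f), ← eta_mod l r hr 1, h1]
    rw [eta_pow] at h2
    have h3 : eta l 1 = 1 := by simp [eta]
    rcases eta_pm l p hpl with h | h
    · exact h
    · rw [h, hodd.neg_one_pow, h3] at h2; norm_num at h2
  set S := (Finset.range (l ^ r)).filter (fun n => eta l n = eta l k) with hS
  have hSc : S.card = f := by
    have h1 : ∑ n ∈ Finset.range (l ^ r), (eta l n ^ 2 + eta l k * eta l n) = 2 * (S.card : ℤ) := by
      rw [hS, Finset.card_filter]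
      push_cast
      rw [Finset.mul_sum]
      refine Finset.sum_congr rfl fun n _ => ?_
      by_cases h : l ∣ n
      · rw [(eta_zero_iff l n).2 h, if_neg]; · simp
        intro h'; exact hk ((eta_zero_iff l k).1 h'.symm)
      · rcases eta_pm l n h with h | h <;> rcases eta_pm l k hk with h' | h' <;> simp [h, h']
    rw [Finset.sum_add_distrib, ← Finset.mul_sum, sum_eta l h4 r hr, card_eta_sq l r hr, hφ] at h1
    push_cast at h1
    omega
  have hinj : Set.InjOn (fun i => (p ^ i * k) % l ^ r) (Finset.range f) := by
    intro i hi j hj hij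
    simp only at hij
    have h1 : p ^ i * k ≡ p ^ j * k [MOD l ^ r] := hij
    have h2 : p ^ i ≡ p ^ j [MOD l ^ r] := by
      refine Nat.ModEq.cancel_right_of_coprime ?_ h1
      exact Nat.Coprime.pow_left _ ((Nat.Prime.coprime_iff_not_dvd hl).2 hk)
    rw [← ZMod.natCast_eq_natCast_iff] at h2
    push_cast at h2
    rw [Finset.coe_range] at hi hj
    subst hf
    exact pow_injOn_Iio_orderOf hi hj h2
  have himg : (Finset.range f).image (fun i => (p ^ i * k) % l ^ r) = S := by
    refine Finset.eq_of_subset_of_card_le ?_ ?_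
    · intro n hn
      obtain ⟨i, hi, rfl⟩ := Finset.mem_image.1 hn
      rw [hS, Finset.mem_filter, Finset.mem_range]
      refine ⟨Nat.mod_lt _ hNpos, ?_⟩
      rw [eta_mod l r hr, eta_mul, eta_pow, hp1]; simp
    · rw [Finset.card_image_of_injOn hinj, hSc]; simp
  have hsum : ∑ i ∈ Finset.range f, g ((p ^ i * k) % l ^ r) = ∑ n ∈ S, g n := by
    rw [← himg, Finset.sum_image hinj]
  rw [hsum, hS, Finset.sum_filter, Finset.mul_sum, Finset.mul_sum, ← Finset.sum_add_distrib]
  refine Finset.sum_congr rfl fun n _ => ?_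
  by_cases h : l ∣ n
  · rw [(eta_zero_iff l n).2 h, if_neg]; · simp
    intro h'; exact hk ((eta_zero_iff l k).1 h'.symm)
  · rcases eta_pm l n h with h | h <;> rcases eta_pm l k hk with h' | h' <;> simp [h, h'] <;> ring

lemma sum_range_mul' {M : Type*} [AddCommMonoid M] (a b : ℕ) (g : ℕ → M) :
    ∑ n ∈ Finset.range (a * b), g n = ∑ y ∈ Finset.range b, ∑ x ∈ Finset.range a, g (x + a * y) := by
  induction b with
  | zero => simp
  | succ b ih =>
    rw [Finset.sum_range_succ, ← ih, mul_add, mul_one, Finset.sum_range_add]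
    simp only [add_comm]

lemma eta_add_mul (x y : ℕ) : eta l (x + l * y) = eta l x := by
  simp [eta]

lemma sumS_eq : sumS l = ∑ x ∈ Finset.range l, eta l x * (x : ℤ) := by
  unfold sumS
  symm
  refine Finset.sum_nbij' (fun n => (n : ZMod l)) (fun j => j.val) ?_ ?_ ?_ ?_ ?_
  · simp
  · intro j _; exact Finset.mem_range.2 (ZMod.val_lt j)
  · intro n hn; exact ZMod.val_natCast_of_lt (Finset.mem_range.1 hn)
  · intro j _; simp
  · intro n hn
    rw [ZMod.val_natCast_of_lt (Finset.mem_range.1 hn)]; unfold eta; ring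

lemma sum_eta_id (h4 : l % 4 = 3) (s : ℕ) :
    ∑ n ∈ Finset.range (l ^ (s + 1)), eta l n * (n : ℤ) = l ^ s * sumS l := by
  have h0 : ∑ n ∈ Finset.range l, eta l n = 0 := by simpa using sum_eta l h4 1 le_rfl
  rw [pow_succ', sum_range_mul']
  simp only [eta_add_mul]
  rw [Finset.sum_congr rfl (g := fun _ => sumS l)]
  · simp
  · intro y _
    rw [sumS_eq]
    push_cast
    simp only [mul_add, Finset.sum_add_distrib]
    rw [← Finset.sum_mul, h0]; ring

lemma sum_eta_lt (h4 : l % 4 = 3) (t s : ℕ) :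
    ∑ n ∈ Finset.range (l ^ (t + (s + 1))), eta l n * ((l ^ t * n % l ^ (t + (s + 1)) : ℕ) : ℤ) =
      l ^ (2 * t + s) * sumS l := by
  rw [show l ^ (t + (s + 1)) = l ^ (s + 1) * l ^ t by rw [← pow_add, add_comm], sum_range_mul']
  rw [Finset.sum_congr rfl (g := fun _ => (l : ℤ) ^ (t + s) * sumS l)]
  · simp; ring
  · intro y _
    rw [pow_add (l : ℤ), mul_assoc, ← sum_eta_id l h4, Finset.mul_sum]
    refine Finset.sum_congr rfl fun x hx => ?_
    rw [show l ^ (s + 1) * y = l * (l ^ s * y) by rw [pow_succ']; ring, eta_add_mul,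
      mul_comm (l ^ (s+1)) (l ^ t), Nat.mul_mod_mul_left,
      show l * (l ^ s * y) = l ^ (s + 1) * y by rw [pow_succ']; ring, Nat.add_mul_mod_self_left,
      Nat.mod_eq_of_lt (Finset.mem_range.1 hx)]
    push_cast; ring

lemma sum_etasq_lt (h4 : l % 4 = 3) (r t : ℕ) (ht : t < r) (f : ℕ) (hφ : Nat.totient (l ^ r) = 2 * f) :
    ∑ n ∈ Finset.range (l ^ r), eta l n ^ 2 * ((l ^ t * n % l ^ r : ℕ) : ℤ) = l ^ r * f := by
  have hl : l.Prime := Fact.out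
  have hr : 1 ≤ r := by omega
  have h0 : eta l 0 = 0 := (eta_zero_iff l 0).2 (dvd_zero _)
  have hN : eta l (l ^ r) = 0 := (eta_zero_iff l _).2 (dvd_pow_self l (by omega))
  have h1 := sum_reflect (l ^ r) (fun n => eta l n ^ 2 * ((l ^ t * n % l ^ r : ℕ) : ℤ))
    (by simp [h0]) (by simp [hN])
  have h2 : ∑ n ∈ Finset.range (l ^ r), (eta l (l ^ r - n) ^ 2 * ((l ^ t * (l ^ r - n) % l ^ r : ℕ) : ℤ)
     + eta l n ^ 2 * ((l ^ t * n % l ^ r : ℕ) : ℤ)) = ∑ n ∈ Finset.range (l ^ r), eta l n ^ 2 * (l ^ r : ℤ) := by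
    refine Finset.sum_congr rfl fun n hn => ?_
    have hn := (Finset.mem_range.1 hn).le
    rw [eta_sub l h4 r hr n hn]
    by_cases h : l ∣ n
    · rw [(eta_zero_iff l n).2 h]; simp
    have h3 : ¬ l ^ r ∣ l ^ t * n := by
      intro hd
      obtain ⟨s, rfl⟩ := Nat.exists_eq_add_of_lt ht
      rw [show t + s + 1 = t + (s + 1) by ring, pow_add] at hd
      have := Nat.dvd_of_mul_dvd_mul_left (pow_pos hl.pos t) hd
      exact h ((dvd_pow_self l (by omega)).trans this)
    have h4 : (l ^ t * (l ^ r - n) + l ^ t * n) % l ^ r = 0 := by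
      rw [← mul_add, Nat.sub_add_cancel hn, Nat.mul_mod_left]
    have hpos : 0 < l ^ r := pow_pos hl.pos r
    have h5 : l ^ t * (l ^ r - n) % l ^ r + l ^ t * n % l ^ r = l ^ r := by
      rw [Nat.add_mod] at h4
      have a1 := Nat.mod_lt (l ^ t * (l ^ r - n)) hpos
      have a2 := Nat.mod_lt (l ^ t * n) hpos
      have a3 : l ^ t * n % l ^ r ≠ 0 := fun h => h3 (Nat.dvd_of_mod_eq_zero h)
      obtain ⟨c, hc⟩ := Nat.dvd_of_mod_eq_zero h4
      have : c = 1 := by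
        have : c < 2 := by by_contra hh; nlinarith
        have : c ≠ 0 := by
          rintro rfl; rw [mul_zero] at hc; exact a3 (Nat.add_eq_zero_iff.1 hc).2
        omega
      rw [hc, this, mul_one]
    have h6 : ((l ^ t * (l ^ r - n) % l ^ r : ℕ) : ℤ) + ((l ^ t * n % l ^ r : ℕ) : ℤ) = (l : ℤ) ^ r := by
      exact_mod_cast h5
    rw [neg_sq, ← mul_add, h6]
  rw [Finset.sum_add_distrib, h1, ← Finset.sum_mul, card_eta_sq l r hr, hφ] at h2
  push_cast at h2 ⊢
  linarith

/-- digit sum -/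
lemma digit (h4 : l % 4 = 3) (r : ℕ) (p f : ℕ) (hpl : ¬ l ∣ p)
    (hf : orderOf (p : ZMod (l ^ r)) = f) (hφ : Nat.totient (l ^ r) = 2 * f) (hodd : Odd f)
    (k : ℕ) (hk : ¬ l ∣ k) (h : ℤ) (hh : h * l = |sumS l|) : ∃ ε : ℤ, (ε = 1 ∨ ε = -1) ∧ ∀ t < r,
    (2 * ∑ i ∈ Finset.range f, (((p ^ i * (k * l ^ t)) % l ^ r : ℕ) : ℤ) = l ^ r * (f + ε * (h * l ^ t))) ∧
    (2 * ∑ i ∈ Finset.range f, (((p ^ i * (k * ((l ^ r - 1) * l ^ t))) % l ^ r : ℕ) : ℤ) =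
      l ^ r * (f - ε * (h * l ^ t))) := by
  have hl : l.Prime := Fact.out
  have hl0 : (l : ℤ) ≠ 0 := by exact_mod_cast hl.ne_zero
  obtain ⟨ε0, hε0, hs⟩ : ∃ ε0 : ℤ, (ε0 = 1 ∨ ε0 = -1) ∧ sumS l = ε0 * (h * l) := by
    rcases abs_choice (sumS l) with h' | h' <;> rw [h'] at hh
    · exact ⟨1, Or.inl rfl, by linarith⟩
    · exact ⟨-1, Or.inr rfl, by linarith⟩
  have key : ∀ k : ℕ, ¬ l ∣ k → ∀ t < r, 2 * ∑ i ∈ Finset.range f, (((p ^ i * (k * l ^ t)) % l ^ r : ℕ) : ℤ) =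
     l ^ r * (f + (eta l k * ε0) * (h * l ^ t)) := by
    intro k hk t ht
    have hr : 1 ≤ r := by omega
    have h1 := orbit l h4 r hr p f hpl hf hφ hodd (fun n => ((l ^ t * n % l ^ r : ℕ) : ℤ)) k hk
    simp only [Int.cast_id] at h1
    rw [sum_etasq_lt l h4 r t ht f hφ] at h1
    obtain ⟨s, rfl⟩ := Nat.exists_eq_add_of_lt ht
    rw [show t + s + 1 = t + (s + 1) by ring] at h1 ⊢
    rw [sum_eta_lt l h4 t s, hs] at h1
    have h2 : ∀ i, (p ^ i * (k * l ^ t)) % l ^ (t + (s + 1)) = l ^ t * (p ^ i * k % l ^ (t + (s + 1))) % l ^ (t + (s + 1)) := by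
      intro i
      rw [Nat.mul_mod_mod]; congr 1; ring
    simp only [h2]
    rw [h1]
    ring
  refine ⟨eta l k * ε0, ?_, fun t ht => ⟨key k hk t ht, ?_⟩⟩
  · rcases eta_pm l k hk with h | h <;> rcases hε0 with h' | h' <;> simp [h, h']
  · have hr : 1 ≤ r := by omega
    have hge : 1 ≤ l ^ r := Nat.one_le_pow _ _ hl.pos
    have e1 : eta l (l ^ r - 1) = -1 := by
      rw [eta_sub l h4 r hr 1 hge]; simp [eta]
    have hk' : ¬ l ∣ k * (l ^ r - 1) := by
      rw [hl.dvd_mul]; push Not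
      refine ⟨hk, fun hd => ?_⟩
      rw [← eta_zero_iff, e1] at hd; norm_num at hd
    have := key _ hk' t ht
    rw [eta_mul, e1] at this
    simp only [← mul_assoc] at this ⊢
    rw [this]; ring

end
end G16

open Complex Polynomial IntermediateField

namespace G16

lemma arith (l : ℕ) (hl : l.Prime) (h4 : l % 4 = 3) (r : ℕ) (hr : 1 ≤ r) (f : ℕ)
    (hind : f = Nat.totient (l ^ r) / 2) :
    f = l ^ (r - 1) * ((l - 1) / 2) ∧ Nat.totient (l ^ r) = 2 * f ∧ Odd f := by
  have h1 : Nat.totient (l ^ r) = l ^ (r - 1) * (l - 1) := Nat.totient_prime_pow hl (by omega)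
  obtain ⟨m, hm⟩ : ∃ m, l = 4 * m + 3 := ⟨l / 4, by omega⟩
  have h2 : l - 1 = 2 * ((l - 1) / 2) := by omega
  have h3 : l ^ (r - 1) * (l - 1) = 2 * (l ^ (r - 1) * ((l - 1) / 2)) := by
    rw [show l ^ (r - 1) * (l - 1) = l ^ (r - 1) * (2 * ((l - 1) / 2)) by rw [← h2]]; ring
  have h5 : f = l ^ (r - 1) * ((l - 1) / 2) := by rw [hind, h1, h3]; omega
  refine ⟨h5, by rw [h1, h3, h5], ?_⟩
  rw [h5]
  refine Odd.mul (Odd.pow ?_) ?_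
  · exact ⟨2 * m + 1, by omega⟩
  · exact ⟨m, by omega⟩

lemma not_one_mod (l : ℕ) (hl : l.Prime) (h4 : l % 4 = 3) (h7 : 7 ≤ l) (r : ℕ) (hr : 1 ≤ r) (p f : ℕ)
    (hp : p.Prime) (hf : orderOf (p : ZMod (l ^ r)) = f) (hff : f = l ^ (r - 1) * ((l - 1) / 2)) :
    ¬ l ∣ p - 1 := by
  intro hd
  have h1 : (l : ℤ) ∣ (p : ℤ) - 1 := by
    have := Int.natCast_dvd_natCast.2 hd
    rwa [Nat.cast_sub hp.one_le, Nat.cast_one] at this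
  have h2 := dvd_sub_pow_of_dvd_sub h1 (r - 1)
  rw [Nat.sub_add_cancel hr, one_pow] at h2
  have h3 : (p : ZMod (l ^ r)) ^ (l ^ (r - 1)) = 1 := by
    have h := (ZMod.intCast_zmod_eq_zero_iff_dvd ((p : ℤ) ^ (l ^ (r - 1)) - 1) (l ^ r)).2 (by exact_mod_cast h2)
    push_cast at h
    exact sub_eq_zero.1 h
  have h5 := Nat.le_of_dvd (pow_pos hl.pos _) (orderOf_dvd_of_pow_eq_one h3)
  rw [hf, hff] at h5
  have : 3 ≤ (l - 1) / 2 := by omega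
  have hpos : 0 < l ^ (r - 1) := pow_pos hl.pos _
  nlinarith

section
variable (l : ℕ) [Fact l.Prime]

lemma T_mem (h4 : l % 4 = 3) (ξ : ℂ) (hξ : ξ ^ l = 1) :
    ∑ x ∈ Finset.range l, (eta l x : ℂ) * ξ ^ x ∈ ℚ⟮sqrtNeg l⟯ := by
  have hl : l.Prime := Fact.out
  by_cases h1 : ξ = 1
  · subst h1
    have := sum_eta l h4 1 le_rfl
    rw [pow_one] at this
    have h2 : ∑ x ∈ Finset.range l, (eta l x : ℂ) * 1 ^ x = ((∑ x ∈ Finset.range l, eta l x : ℤ) : ℂ) := by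
      push_cast; simp
    rw [h2, this]; simp
  have hprim : IsPrimitiveRoot ξ l := by
    rw [IsPrimitiveRoot.iff_orderOf]
    exact orderOf_eq_prime hξ h1
  have hsq := gaussSum_sq (qc_ne_one l (by omega)) (qc_quad l)
    (AddChar.zmodChar_primitive_of_primitive_root l hprim)
  rw [qc_neg_one l h4, ZMod.card, neg_one_mul, ← sqrtNeg_sq] at hsq
  have hT : ∑ x ∈ Finset.range l, (eta l x : ℂ) * ξ ^ x = gaussSum (qc l) (AddChar.zmodChar l hξ) := by
    unfold gaussSum
    refine Finset.sum_nbij' (fun n => (n : ZMod l)) (fun j => j.val) ?_ ?_ ?_ ?_ ?_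
    · simp
    · intro j _; exact Finset.mem_range.2 (ZMod.val_lt j)
    · intro n hn; exact ZMod.val_natCast_of_lt (Finset.mem_range.1 hn)
    · intro j _; simp
    · intro n hn
      rw [AddChar.zmodChar_apply, ZMod.val_natCast_of_lt (Finset.mem_range.1 hn)]; rfl
  rw [hT]
  have hm : sqrtNeg l ∈ ℚ⟮sqrtNeg l⟯ := mem_adjoin_simple_self ℚ _
  rcases sq_eq_sq_iff_eq_or_eq_neg.1 hsq with h | h
  · rw [h]; exact hm
  · rw [h]; exact neg_mem hm

lemma T2_mem (h4 : l % 4 = 3) (ξ : ℂ) (hξ : ξ ^ l = 1) :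
    ∑ x ∈ Finset.range l, ((eta l x ^ 2 : ℤ) : ℂ) * ξ ^ x ∈ ℚ⟮sqrtNeg l⟯ := by
  have hl : l.Prime := Fact.out
  have h2 : ∑ x ∈ Finset.range l, ((eta l x ^ 2 : ℤ) : ℂ) * ξ ^ x = ∑ x ∈ Finset.range l, ξ ^ x - 1 := by
    obtain ⟨m, rfl⟩ : ∃ m, l = m + 1 := ⟨l - 1, by have := hl.pos; omega⟩
    rw [Finset.sum_range_succ', Finset.sum_range_succ' (fun x => ξ ^ x)]
    have h0 : eta (m + 1) 0 = 0 := (eta_zero_iff _ 0).2 (dvd_zero _)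
    rw [h0]
    simp only [pow_zero]
    rw [Finset.sum_congr rfl (g := fun x => ξ ^ (x + 1))]
    · push_cast; ring
    · intro x hx
      rw [eta_sq]; · simp
      intro hd
      have := Nat.le_of_dvd (by omega) hd
      have := Finset.mem_range.1 hx
      omega
  rw [h2]
  by_cases h1 : ξ = 1
  · subst h1; simp only [one_pow, Finset.sum_const, Finset.card_range, nsmul_eq_mul, mul_one]
    exact sub_mem (_root_.natCast_mem _ _) (one_mem _)
  · rw [geom_sum_eq h1, hξ]; simp

lemma split_mem (r : ℕ) (hr : 1 ≤ r) (ξ : ℂ) (hξ : ξ ^ l ^ r = 1) (g : ℕ → ℂ)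
    (hg : ∀ x y, g (x + l * y) = g x)
    (h : ξ ^ l = 1 → ∑ x ∈ Finset.range l, g x * ξ ^ x ∈ ℚ⟮sqrtNeg l⟯) :
    ∑ n ∈ Finset.range (l ^ r), g n * ξ ^ n ∈ ℚ⟮sqrtNeg l⟯ := by
  obtain ⟨s, rfl⟩ : ∃ s, r = s + 1 := ⟨r - 1, by omega⟩
  rw [pow_succ', sum_range_mul']
  have h1 : ∑ y ∈ Finset.range (l ^ s), ∑ x ∈ Finset.range l, g (x + l * y) * ξ ^ (x + l * y)
      = (∑ y ∈ Finset.range (l ^ s), (ξ ^ l) ^ y) * ∑ x ∈ Finset.range l, g x * ξ ^ x := by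
    rw [Finset.sum_mul]
    refine Finset.sum_congr rfl fun y _ => ?_
    rw [Finset.mul_sum]
    refine Finset.sum_congr rfl fun x _ => ?_
    rw [hg, pow_add, pow_mul]; ring
  rw [h1]
  by_cases h2 : ξ ^ l = 1
  · refine mul_mem ?_ (h h2)
    rw [h2]; exact sum_mem fun y _ => by simp
  · rw [geom_sum_eq h2, ← pow_mul, ← pow_succ', hξ]; simp

lemma period_mem (h4 : l % 4 = 3) (r : ℕ) (hr : 1 ≤ r) (p f : ℕ) (hpl : ¬ l ∣ p)
    (hf : orderOf (p : ZMod (l ^ r)) = f) (hφ : Nat.totient (l ^ r) = 2 * f) (hodd : Odd f)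
    (ξ : ℂ) (hξ : ξ ^ l ^ r = 1) :
    ∑ i ∈ Finset.range f, ξ ^ p ^ i ∈ ℚ⟮sqrtNeg l⟯ := by
  have hl : l.Prime := Fact.out
  have h1 := orbit l h4 r hr p f hpl hf hφ hodd (fun n => ξ ^ n) 1 (by
    intro hd; exact hl.one_lt.ne' (Nat.dvd_one.1 hd))
  have h2 : ∀ i, ξ ^ (p ^ i * 1 % l ^ r) = ξ ^ p ^ i := by
    intro i; rw [mul_one]; exact (pow_eq_pow_mod _ hξ).symm
  simp only [h2] at h1
  have h3 : ∑ i ∈ Finset.range f, ξ ^ p ^ i = (2 : ℂ)⁻¹ * (2 * ∑ i ∈ Finset.range f, ξ ^ p ^ i) := by ring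
  rw [h3, h1]
  refine mul_mem (inv_mem (ofNat_mem _ 2)) (add_mem ?_ (mul_mem (intCast_mem _ _) ?_))
  · exact split_mem l r hr ξ hξ _ (fun x y => by rw [eta_add_mul]) (T2_mem l h4 ξ)
  · exact split_mem l r hr ξ hξ _ (fun x y => by rw [eta_add_mul]) (T_mem l h4 ξ)
end

section
variable (p : ℕ) [Fact p.Prime] {F : Type} [Field F] [Fintype F] [Algebra (ZMod p) F]

lemma gauss_frob_pow (χ : MulChar F ℂ) (m i : ℕ) :
    gaussSum (χ ^ (m * p ^ i)) (psi p F) = gaussSum (χ ^ m) (psi p F) := by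
  induction i with
  | zero => simp
  | succ i ih =>
    rw [pow_succ, ← mul_assoc, pow_mul, gauss_frob, ih]

lemma chi_pow {F : Type} [Field F] (χ : MulChar F ℂ) (n : ℕ) (x : F) (hx : x ≠ 0) : (χ ^ n) x = χ x ^ n :=
  MulChar.pow_apply_coe χ n (Units.mk0 x hx)

lemma gauss_descent (χ : MulChar F ℂ) (hχ : ∀ c : ZMod p, c ≠ 0 → χ (algebraMap (ZMod p) F c) = 1) (m : ℕ) :
    ((p : ℂ) - 1) * gaussSum (χ ^ m) (psi p F) = ∑ x : F, (χ ^ m) x *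
      (if Algebra.trace (ZMod p) F x = 0 then (p : ℂ) - 1 else -1) := by
  classical
  have hp : p.Prime := Fact.out
  have h1 : ∀ c ∈ Finset.univ.erase (0 : ZMod p), gaussSum (χ ^ m) (psi p F) =
      ∑ x : F, (χ ^ m) x * psi p F (algebraMap (ZMod p) F c * x) := by
    intro c hc
    have hc0 : c ≠ 0 := Finset.ne_of_mem_erase hc
    have hne : algebraMap (ZMod p) F c ≠ 0 := by
      rwa [Ne, FaithfulSMul.algebraMap_eq_zero_iff]
    unfold gaussSum
    rw [← Equiv.sum_comp (Equiv.mulLeft₀ _ hne)]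
    refine Finset.sum_congr rfl fun x _ => ?_
    simp only [Equiv.mulLeft₀_apply, map_mul]
    rw [chi_pow χ m _ hne, hχ c hc0]; simp
  have h2 := Finset.sum_congr (rfl : Finset.univ.erase (0 : ZMod p) = _) h1
  rw [Finset.sum_const, Finset.card_erase_of_mem (Finset.mem_univ _), Finset.card_univ, ZMod.card,
    nsmul_eq_mul, Nat.cast_sub hp.one_le, Nat.cast_one] at h2
  rw [h2, Finset.sum_comm]
  refine Finset.sum_congr rfl fun x _ => ?_
  rw [← Finset.mul_sum]
  congr 1
  have h3 := AddChar.sum_mulShift (Algebra.trace (ZMod p) F x) (ZMod.isPrimitive_stdAddChar p)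
  rw [← Finset.sum_erase_add _ _ (Finset.mem_univ (0 : ZMod p)), zero_mul, AddChar.map_zero_eq_one,
    ZMod.card] at h3
  have h4 : ∀ c : ZMod p, psi p F (algebraMap (ZMod p) F c * x) =
      ZMod.stdAddChar (c * Algebra.trace (ZMod p) F x) := by
    intro c
    rw [psi_std, ← Algebra.smul_def, map_smul, smul_eq_mul]
  simp only [h4]
  split_ifs at h3 ⊢ <;> linear_combination h3

lemma chi_base (χ : MulChar F ℂ) (N : ℕ) (hχ : χ ^ N = 1) (hN : N.Coprime (p - 1)) (c : ZMod p)
    (hc : c ≠ 0) : χ (algebraMap (ZMod p) F c) = 1 := by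
  have hne : algebraMap (ZMod p) F c ≠ 0 := by
    rwa [Ne, FaithfulSMul.algebraMap_eq_zero_iff]
  have h1 : χ (algebraMap (ZMod p) F c) ^ N = 1 := by
    rw [← chi_pow χ N _ hne, hχ]; exact MulChar.one_apply_coe (Units.mk0 _ hne)
  have h2 : χ (algebraMap (ZMod p) F c) ^ (p - 1) = 1 := by
    rw [← map_pow, ← map_pow, ZMod.pow_card_sub_one_eq_one hc, map_one, map_one]
  have := orderOf_dvd_of_pow_eq_one h1
  have h4 := Nat.dvd_gcd this (orderOf_dvd_of_pow_eq_one h2)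
  rw [hN] at h4
  exact orderOf_eq_one_iff.1 (Nat.dvd_one.1 h4)

lemma gauss_mem (l : ℕ) [Fact l.Prime] (h4 : l % 4 = 3) (r : ℕ) (hr : 1 ≤ r) (f : ℕ) (hpl : ¬ l ∣ p)
    (hpl1 : ¬ l ∣ p - 1)
    (hf : orderOf (p : ZMod (l ^ r)) = f) (hφ : Nat.totient (l ^ r) = 2 * f) (hodd : Odd f)
    (χ : MulChar F ℂ) (hχ : χ ^ l ^ r = 1) (m : ℕ) :
    gaussSum (χ ^ m) (psi p F) ∈ ℚ⟮sqrtNeg l⟯ := by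
  have hp : p.Prime := Fact.out
  have hl : l.Prime := Fact.out
  have hb := chi_base p χ (l ^ r) hχ (Nat.Coprime.pow_left _ ((Nat.Prime.coprime_iff_not_dvd hl).2 hpl1))
  have h1 : (f : ℂ) * (((p : ℂ) - 1) * gaussSum (χ ^ m) (psi p F)) ∈ ℚ⟮sqrtNeg l⟯ := by
    have h2 : (f : ℂ) * (((p : ℂ) - 1) * gaussSum (χ ^ m) (psi p F)) =
        ∑ x : F, (∑ i ∈ Finset.range f, (χ ^ (m * p ^ i)) x) *
      (if Algebra.trace (ZMod p) F x = 0 then (p : ℂ) - 1 else -1) := by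
      have h3 : ∑ i ∈ Finset.range f, ((p : ℂ) - 1) * gaussSum (χ ^ (m * p ^ i)) (psi p F) =
         (f : ℂ) * (((p : ℂ) - 1) * gaussSum (χ ^ m) (psi p F)) := by
        simp only [gauss_frob_pow]; simp
      rw [← h3]
      simp only [gauss_descent p χ hb, Finset.sum_mul]
      rw [Finset.sum_comm]
    rw [h2]
    refine sum_mem fun x _ => mul_mem ?_ ?_
    · by_cases hx : x = 0
      · subst hx
        refine sum_mem fun i _ => ?_
        rw [MulChar.map_zero]; exact zero_mem _
      · have h5 : ∀ i, (χ ^ (m * p ^ i)) x = (χ x ^ m) ^ p ^ i := by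
          intro i; rw [chi_pow χ _ x hx, pow_mul]
        simp only [h5]
        refine period_mem l h4 r hr p f hpl hf hφ hodd _ ?_
        rw [pow_right_comm, ← chi_pow χ _ x hx, hχ]
        rw [show (1 : MulChar F ℂ) x = 1 from MulChar.one_apply_coe (Units.mk0 _ hx), one_pow]
    · split_ifs
      · exact sub_mem (_root_.natCast_mem _ _) (one_mem _)
      · exact neg_mem (one_mem _)
  have hf0 : (f : ℂ) ≠ 0 := by exact_mod_cast hodd.pos.ne'
  have hp0 : ((p : ℂ) - 1) ≠ 0 := by
    rw [sub_ne_zero]; exact_mod_cast hp.one_lt.ne'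
  have h6 : gaussSum (χ ^ m) (psi p F) = (f : ℂ)⁻¹ * (((p : ℂ) - 1)⁻¹ * ((f : ℂ) * (((p : ℂ) - 1) * gaussSum (χ ^ m) (psi p F)))) := by
    field_simp
  rw [h6]
  exact mul_mem (inv_mem (_root_.natCast_mem _ _)) (mul_mem (inv_mem (sub_mem (_root_.natCast_mem _ _) (one_mem _))) h1)

lemma gauss_conj (χ : MulChar F ℂ) (N : ℕ) (hN : Odd N) (hχ : χ ^ N = 1) (m : ℕ) :
    (starRingEnd ℂ) (gaussSum (χ ^ m) (psi p F)) = gaussSum (χ ^ ((N - 1) * m)) (psi p F) := by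
  have h1 : (χ ^ m)⁻¹ = χ ^ ((N - 1) * m) := by
    rw [inv_eq_iff_mul_eq_one, ← pow_add]
    rw [show m + (N - 1) * m = N * m by
      obtain ⟨k, rfl⟩ := hN; simp; ring, pow_mul, hχ, one_pow]
  have h2 := star_gaussSum_eq (χ ^ m) (psi p F)
  rw [starRingEnd_apply, h2, h1, ← mul_gaussSum_inv_eq_gaussSum]
  have hneg : (-1 : F) ≠ 0 := by simp
  have h3 : χ (-1) = 1 := by
    have a1 : χ (-1) ^ N = 1 := by
      rw [← chi_pow χ N _ hneg, hχ]; exact MulChar.one_apply_coe (Units.mk0 _ hneg)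
    have a2 : χ (-1) ^ 2 = 1 := by rw [← map_pow]; simp
    obtain ⟨k, rfl⟩ := hN
    rwa [pow_add, pow_mul, a2, one_pow, one_mul, pow_one] at a1
  rw [chi_pow χ _ _ hneg, h3, one_pow, one_mul, inv_inv]

lemma gauss_norm (χ : MulChar F ℂ) (hχ : χ ≠ 1) :
    gaussSum χ (psi p F) * (starRingEnd ℂ) (gaussSum χ (psi p F)) = Fintype.card F := by
  rw [starRingEnd_apply, star_gaussSum_eq]
  exact gaussSum_mul_gaussSum_eq_card hχ (psi_prim p)
end
end G16

open Complex Polynomial IntermediateField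

namespace G16

lemma conj_form (l : ℕ) (u v : ℚ) : (starRingEnd ℂ) ((u : ℂ) + v * sqrtNeg l) = (u : ℂ) - v * sqrtNeg l := by
  rw [map_add, map_mul, conj_sqrtNeg, map_ratCast, map_ratCast]; ring

lemma conj_int {x : ℂ} (hx : IsIntegral ℤ x) : IsIntegral ℤ ((starRingEnd ℂ) x) :=
  hx.map ((starRingEnd ℂ).toIntAlgHom)

lemma form_norm (l : ℕ) (u v : ℚ) :
    ((u : ℂ) + v * sqrtNeg l) * ((u : ℂ) - v * sqrtNeg l) = ((u ^ 2 + l * v ^ 2 : ℚ) : ℂ) := by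
  have := sqrtNeg_sq l
  push_cast
  linear_combination (-(v : ℂ) ^ 2) * this

section
variable {V : ValuationSubring ℂ}

/-- the trace of an integral-ish element -/
lemma trace_int {p : ℕ} (hp : p.Prime) (hV : V.valuation (p : ℂ) < 1) (l : ℕ) (M e : ℕ) (u v : ℚ)
    (hint : IsIntegral ℤ ((p : ℂ) ^ M * ((u : ℂ) + v * sqrtNeg l)))
    (h1 : V.valuation ((u : ℂ) + v * sqrtNeg l) ≤ V.valuation (p : ℂ) ^ e)
    (h2 : V.valuation ((u : ℂ) - v * sqrtNeg l) ≤ V.valuation (p : ℂ) ^ e) :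
    ∃ n : ℤ, 2 * u = p ^ e * n := by
  have hp0 : (p : ℚ) ≠ 0 := by exact_mod_cast hp.ne_zero
  have hc := conj_int hint
  rw [map_mul, conj_form, map_pow, map_natCast] at hc
  have hs := hint.add hc
  have e1 : (p : ℂ) ^ M * ((u : ℂ) + v * sqrtNeg l) + (p : ℂ) ^ M * ((u : ℂ) - v * sqrtNeg l) =
     ((p ^ M * (2 * u) : ℚ) : ℂ) := by push_cast; ring
  rw [e1] at hs
  obtain ⟨n, hn⟩ := rat_int hs
  have h3 : V.valuation ((n : ℤ) : ℂ) ≤ V.valuation (p : ℂ) ^ (M + e) := by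
    have : ((n : ℤ) : ℂ) = (p : ℂ) ^ M * (((u : ℂ) + v * sqrtNeg l) + ((u : ℂ) - v * sqrtNeg l)) := by
      have hn' : ((n : ℚ) : ℂ) = ((p ^ M * (2 * u) : ℚ) : ℂ) := by rw [hn]
      push_cast at hn'
      rw [hn']; ring
    rw [this, map_mul, map_pow, pow_add]
    refine mul_le_mul_right ?_ _
    exact (V.valuation.map_add _ _).trans (max_le h1 h2)
  obtain ⟨k, hk⟩ := dvd_of_val hp hV h3
  refine ⟨k, ?_⟩
  have : (p : ℚ) ^ M * (2 * u) = p ^ M * (p ^ e * k) := by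
    rw [hn, hk]; push_cast; ring
  exact mul_left_cancel₀ (pow_ne_zero M hp0) this

lemma unit_pm {p : ℕ} (hp : p.Prime) (hV : V.valuation (p : ℂ) < 1) (l : ℕ) (hl : l.Prime) (h7 : 7 ≤ l)
    (β : ℂ) (hβ : β ∈ ℚ⟮sqrtNeg l⟯) (hn : β * (starRingEnd ℂ) β = 1) (M : ℕ)
    (hint : IsIntegral ℤ ((p : ℂ) ^ M * β)) (h1 : V.valuation β ≤ 1)
    (h2 : V.valuation ((starRingEnd ℂ) β) ≤ 1) : β = 1 ∨ β = -1 := by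
  obtain ⟨u, v, rfl⟩ := mem_form β hβ
  rw [conj_form] at hn h2
  rw [form_norm] at hn
  have hn' : u ^ 2 + l * v ^ 2 = 1 := by exact_mod_cast hn
  obtain ⟨c, hc⟩ := trace_int hp hV l M 0 u v hint (by simpa using h1) (by simpa using h2)
  rw [pow_zero, one_mul] at hc
  obtain ⟨k, hk⟩ := lw_int (w := 2 * v) (n := 4 - c ^ 2) hl (by
    push_cast; rw [← hc]; linear_combination 4 * hn')
  have h3 : c ^ 2 + l * k ^ 2 = 4 := by
    have : ((c ^ 2 + l * k ^ 2 : ℤ) : ℚ) = ((4 : ℤ) : ℚ) := by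
      push_cast; rw [← hc, ← hk]; linear_combination 4 * hn'
    exact_mod_cast this
  have hl' : (7 : ℤ) ≤ l := by exact_mod_cast h7
  have hk0 : k = 0 := by
    by_contra hk0
    have : 1 ≤ k ^ 2 := by
      have := sq_nonneg k
      have : k ^ 2 ≠ 0 := pow_ne_zero 2 hk0
      omega
    nlinarith [sq_nonneg c]
  have hv : v = 0 := by
    rw [hk0] at hk; simpa using hk
  subst hv
  simp only [ne_eq, OfNat.ofNat_ne_zero, not_false_eq_true, zero_pow, mul_zero, add_zero] at hn'
  rcases sq_eq_one_iff.1 hn' with h | h <;> rw [h] <;> simp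

lemma gauss_val_l {p l : ℕ} [Fact p.Prime] [Fact l.Prime] (hV : V.valuation (l : ℂ) < 1)
    {F : Type} [Field F] [Fintype F] [Algebra (ZMod p) F] (χ : MulChar F ℂ) (r : ℕ) (hχ : χ ^ l ^ r = 1) (m : ℕ) :
    V.valuation (gaussSum (χ ^ m) (psi p F) + 1) < 1 := by
  classical
  have hl : l.Prime := Fact.out
  have hp : p.Prime := Fact.out
  have h0 : ∑ x : F, psi p F x = 0 := AddChar.sum_eq_zero_of_ne_one (psi_ne_one p)
  have h1 : gaussSum (χ ^ m) (psi p F) + 1 =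
      ∑ x ∈ Finset.univ.erase (0 : F), ((χ ^ m) x - 1) * psi p F x := by
    have e1 : gaussSum (χ ^ m) (psi p F) = ∑ x ∈ Finset.univ.erase (0 : F), (χ ^ m) x * psi p F x := by
      unfold gaussSum
      rw [← Finset.sum_erase_add _ _ (Finset.mem_univ (0 : F)), MulChar.map_zero]; simp
    rw [← Finset.sum_erase_add _ _ (Finset.mem_univ (0 : F)), AddChar.map_zero_eq_one] at h0
    simp only [sub_mul, one_mul, Finset.sum_sub_distrib]
    rw [e1]; linear_combination h0
  rw [h1]
  refine Valuation.map_sum_lt _ one_ne_zero fun x hx => ?_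
  have hx0 : x ≠ 0 := Finset.ne_of_mem_erase hx
  rw [map_mul]
  have h2 : V.valuation (psi p F x) ≤ 1 := by
    rw [psi_apply]; exact val_int ((zetaP_int p).pow _)
  have h3 : V.valuation ((χ ^ m) x - 1) < 1 := by
    refine val_rou_sub (r := r) hl hV ?_
    rw [← chi_pow _ _ _ hx0, ← pow_mul, mul_comm, pow_mul, hχ, one_pow]
    exact MulChar.one_apply_coe (Units.mk0 _ hx0)
  exact (mul_le_of_le_one_right' h2).trans_lt h3

lemma vals {p l : ℕ} [Fact p.Prime] [Fact l.Prime] (hV : V.valuation (p : ℂ) < 1) (h4 : l % 4 = 3)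
    (h7 : 7 ≤ l)
    {F : Type} [Field F] [Fintype F] [Algebra (ZMod p) F] (χ : MulChar F ℂ) (r : ℕ) (hr : 1 ≤ r)
    (hχ : orderOf χ = l ^ r)
    (f : ℕ) (hpl : ¬ l ∣ p) (hcard : Fintype.card F = p ^ f)
    (hf : orderOf (p : ZMod (l ^ r)) = f) (hφ : Nat.totient (l ^ r) = 2 * f) (hodd : Odd f) :
    ∃ c d : ℕ, ∀ t < r, ∃ e : ℕ, f = 2 * e + classNumSqrtNeg l * l ^ t ∧
      V.valuation (gaussSum (χ ^ l ^ t) (psi p F)) =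
        V.valuation (p : ℂ) ^ (e + c * (classNumSqrtNeg l * l ^ t)) ∧
      V.valuation ((starRingEnd ℂ) (gaussSum (χ ^ l ^ t) (psi p F))) =
        V.valuation (p : ℂ) ^ (e + d * (classNumSqrtNeg l * l ^ t)) := by
  have hl : l.Prime := Fact.out
  have hp : p.Prime := Fact.out
  have hlodd : Odd l := ⟨(l / 4) * 2 + 1, by omega⟩
  have hNodd : Odd (l ^ r) := hlodd.pow
  have hNpos : 0 < l ^ r := hNodd.pos
  have hN1 : 1 < l ^ r := Nat.one_lt_pow (by omega) hl.one_lt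
  obtain ⟨k, hk, hst⟩ := stick p hV F f hodd.pos.ne' hcard (l ^ r) hN1 χ hχ
  have hk' : ¬ l ∣ k := by
    rw [Nat.coprime_pow_right_iff (by omega), Nat.coprime_comm] at hk
    exact (Nat.Prime.coprime_iff_not_dvd hl).1 hk
  obtain ⟨ε, hε, hd⟩ := digit l h4 r p f hpl hf hφ hodd k hk' (classNumSqrtNeg l)
    (class_formula l hl h4 h7)
  have hval : ∀ (x : ℂ) (S n : ℕ), V.valuation x ^ (l ^ r) = V.valuation (p : ℂ) ^ S →
      S = l ^ r * n → V.valuation x = V.valuation (p : ℂ) ^ n := by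
    intro x S n h1 h2
    rw [h2, mul_comm, pow_mul] at h1
    exact (pow_left_inj₀ zero_le zero_le hNpos.ne').1 h1
  have hpow1 : χ ^ l ^ r = 1 := by rw [← hχ]; exact pow_orderOf_eq_one χ
  have step : ∀ t < r, ∃ e : ℕ, f = 2 * e + classNumSqrtNeg l * l ^ t ∧
    ((ε = 1 ∧ ∑ i ∈ Finset.range f, (p ^ i * (k * l ^ t)) % l ^ r = l ^ r * (e + classNumSqrtNeg l * l ^ t) ∧
      ∑ i ∈ Finset.range f, (p ^ i * (k * ((l ^ r - 1) * l ^ t))) % l ^ r = l ^ r * e) ∨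
     (ε = -1 ∧ ∑ i ∈ Finset.range f, (p ^ i * (k * l ^ t)) % l ^ r = l ^ r * e ∧
      ∑ i ∈ Finset.range f, (p ^ i * (k * ((l ^ r - 1) * l ^ t))) % l ^ r =
        l ^ r * (e + classNumSqrtNeg l * l ^ t))) := by
    intro t ht
    obtain ⟨d1, d2⟩ := hd t ht
    rw [← Nat.cast_sum] at d1 d2
    have base : ∀ S1 S2 : ℕ, 2 * (S1 : ℤ) = l ^ r * (f + classNumSqrtNeg l * l ^ t) →
        2 * (S2 : ℤ) = l ^ r * (f - classNumSqrtNeg l * l ^ t) →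
        ∃ e : ℕ, f = 2 * e + classNumSqrtNeg l * l ^ t ∧ S1 = l ^ r * (e + classNumSqrtNeg l * l ^ t) ∧
          S2 = l ^ r * e := by
      intro S1 S2 h1 h2
      have hNZ : (0 : ℤ) < (l : ℤ) ^ r := by exact_mod_cast hNpos
      have hpos : (0 : ℤ) ≤ f - classNumSqrtNeg l * l ^ t := by
        by_contra hneg
        push Not at hneg
        have : (l : ℤ) ^ r * (f - classNumSqrtNeg l * l ^ t) < 0 := mul_neg_of_pos_of_neg hNZ hneg
        omega
      have hev : Even ((f : ℤ) - classNumSqrtNeg l * l ^ t) := by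
        have h3 : Even ((l : ℤ) ^ r * (f - classNumSqrtNeg l * l ^ t)) := ⟨S2, by rw [← h2]; ring⟩
        rcases Int.even_mul.1 h3 with h | h
        · exfalso
          have h5 : Odd ((l : ℤ) ^ r) := by exact_mod_cast hNodd
          exact (Int.not_even_iff_odd.2 h5) h
        · exact h
      obtain ⟨z, hz⟩ := hev
      obtain ⟨e, rfl⟩ := Int.eq_ofNat_of_zero_le (show 0 ≤ z by omega)
      have hfe : (f : ℤ) = 2 * e + classNumSqrtNeg l * l ^ t := by linarith
      refine ⟨e, by exact_mod_cast hfe, ?_, ?_⟩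
      · have : (S1 : ℤ) = l ^ r * (e + classNumSqrtNeg l * l ^ t) := by
          rw [hfe] at h1
          refine mul_left_cancel₀ (two_ne_zero (α := ℤ)) ?_
          rw [h1]; ring
        exact_mod_cast this
      · have : (S2 : ℤ) = l ^ r * e := by
          rw [hfe] at h2
          refine mul_left_cancel₀ (two_ne_zero (α := ℤ)) ?_
          rw [h2]; ring
        exact_mod_cast this
    rcases hε with h | h
    · rw [h] at d1 d2
      obtain ⟨e, he, h1, h2⟩ := base _ _ (d1.trans (by ring)) (d2.trans (by ring))
      exact ⟨e, he, Or.inl ⟨h, h1, h2⟩⟩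
    · rw [h] at d1 d2
      obtain ⟨e, he, h1, h2⟩ := base _ _ (d2.trans (by ring)) (d1.trans (by ring))
      exact ⟨e, he, Or.inr ⟨h, h2, h1⟩⟩
  rcases hε with h | h
  · refine ⟨1, 0, fun t ht => ?_⟩
    obtain ⟨e, he, h'⟩ := step t ht
    rcases h' with ⟨_, h1, h2⟩ | ⟨h0, _, _⟩
    swap
    · omega
    refine ⟨e, he, ?_, ?_⟩
    · rw [one_mul]; exact hval _ _ _ (hst (l ^ t)) h1
    · rw [zero_mul, add_zero, gauss_conj p χ (l ^ r) hNodd hpow1]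
      exact hval _ _ _ (hst _) h2
  · refine ⟨0, 1, fun t ht => ?_⟩
    obtain ⟨e, he, h'⟩ := step t ht
    rcases h' with ⟨h0, _, _⟩ | ⟨_, h1, h2⟩
    · omega
    refine ⟨e, he, ?_, ?_⟩
    · rw [zero_mul, add_zero]; exact hval _ _ _ (hst (l ^ t)) h1
    · rw [one_mul, gauss_conj p χ (l ^ r) hNodd hpow1]
      exact hval _ _ _ (hst _) h2

end
end G16

open Complex Polynomial IntermediateField

namespace G16

lemma p_pow_half (l : ℕ) (hl : l.Prime) (hl4 : l % 4 = 3) (r : ℕ) (hr : 1 ≤ r) (p f : ℕ) (hpl : ¬ l ∣ p)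
    (hf : orderOf (p : ZMod (l ^ r)) = f) (hff : f = l ^ (r - 1) * ((l - 1) / 2)) :
    (p : ZMod l) ^ ((l - 1) / 2) = 1 ∧ (p : ZMod l) ^ f = 1 := by
  have : Fact l.Prime := ⟨hl⟩
  have h0 : (p : ZMod l) ≠ 0 := by rwa [Ne, ZMod.natCast_eq_zero_iff]
  have h1 : (p : ZMod l) ^ f = 1 := by
    have h1 : ((p ^ f : ℕ) : ZMod (l ^ r)) = ((1 : ℕ) : ZMod (l ^ r)) := by
      push_cast; rw [← hf]; exact pow_orderOf_eq_one _
    rw [ZMod.natCast_eq_natCast_iff] at h1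
    have h2 := h1.of_dvd (dvd_pow_self l (by omega))
    rw [← ZMod.natCast_eq_natCast_iff] at h2
    exact_mod_cast h2
  refine ⟨?_, h1⟩
  have h2 := ZMod.pow_card_sub_one_eq_one h0
  have h3 := orderOf_dvd_of_pow_eq_one h1
  have h4 := orderOf_dvd_of_pow_eq_one h2
  rw [hff] at h3
  refine orderOf_dvd_iff_pow_eq_one.1 (Nat.Coprime.dvd_of_dvd_mul_left ?_ h3)
  refine Nat.Coprime.pow_right _ ?_
  rw [Nat.coprime_comm, Nat.Prime.coprime_iff_not_dvd hl]
  intro hd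
  have := Nat.le_of_dvd (by have := hl.two_le; omega) (hd.trans h4)
  have := hl.two_le
  omega

/-- sign determination -/
lemma sign_contra {l : ℕ} (hl : l.Prime) (h4 : l % 4 = 3) (p : ℕ) (G0 Gt : ℂ) (h0 : IsIntegral ℤ G0) (ht : IsIntegral ℤ Gt)
    (W : ValuationSubring ℂ) (hW : W.valuation (l : ℂ) < 1) (w0 : W.valuation (G0 + 1) < 1)
    (wt : W.valuation (Gt + 1) < 1) (n t : ℕ) (hn : (p : ZMod l) ^ n = 1) (heq : Gt * (p : ℂ) ^ n = - G0 ^ l ^ t) : False := by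
  have m0 : G0 ∈ W := (W.valuation_le_one_iff _).1 (val_int h0)
  have mt : Gt ∈ W := (W.valuation_le_one_iff _).1 (val_int ht)
  set φ := IsLocalRing.residue W with hφ
  have hz : ∀ x : W, W.valuation (x : ℂ) < 1 → φ x = 0 := by
    intro x hx
    rw [hφ, IsLocalRing.residue_eq_zero_iff]
    exact (W.valuation_lt_one_iff x).2 hx
  have e0 : φ ⟨G0, m0⟩ = -1 := by
    have := hz (⟨G0, m0⟩ + 1) w0
    rw [map_add, map_one] at this
    exact eq_neg_of_add_eq_zero_left this
  have et : φ ⟨Gt, mt⟩ = -1 := by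
    have := hz (⟨Gt, mt⟩ + 1) wt
    rw [map_add, map_one] at this
    exact eq_neg_of_add_eq_zero_left this
  have el : φ (l : W) = 0 := hz (l : W) (by simpa using hW)
  have en : φ ((p : W) ^ n) = 1 := by
    have h1 : (((p : ℤ) ^ n - 1 : ℤ) : ZMod l) = 0 := by push_cast; rw [hn]; simp
    obtain ⟨c, hc⟩ := (ZMod.intCast_zmod_eq_zero_iff_dvd _ _).1 h1
    have h2 : ((p : W) ^ n) = 1 + l * (c : W) := by
      have : (((p : ℤ) ^ n : ℤ) : W) = ((1 + l * c : ℤ) : W) := by rw [← hc]; congr 1; ring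
      exact_mod_cast this
    rw [h2, map_add, map_mul, el, map_one]; ring
  have h1 : (⟨Gt, mt⟩ : W) * (p : W) ^ n = - ⟨G0, m0⟩ ^ l ^ t := by
    apply Subtype.ext
    push_cast
    exact heq
  have h2 := congrArg φ h1
  rw [map_mul, map_neg, en, et, map_pow, e0] at h2
  have hodd : Odd (l ^ t) := Odd.pow ⟨(l / 4) * 2 + 1, by omega⟩
  rw [hodd.neg_one_pow] at h2
  have h3 : W.valuation (((2 : ℤ)) : ℂ) < 1 := by
    have : φ (2 : W) = 0 := by
      rw [map_ofNat]; linear_combination -h2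
    rw [hφ, IsLocalRing.residue_eq_zero_iff] at this
    have h5 := (W.valuation_lt_one_iff (2 : W)).1 this
    have h6 : ((2 : W) : ℂ) = ((2 : ℤ) : ℂ) := by push_cast; rfl
    rwa [h6] at h5
  refine h3.ne (val_coprime hl hW ?_)
  intro hd
  have := Int.le_of_dvd (by norm_num) hd
  omega

theorem main (p l r f : ℕ) (hp : p.Prime) (hl : l.Prime) (hl4 : l % 4 = 3)
    (hl7 : 7 ≤ l) (hr : 1 ≤ r) (hpl : ¬ l ∣ p)
    (hf : orderOf (p : ZMod (l ^ r)) = f) (hind : f = Nat.totient (l ^ r) / 2)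
    (F : Type) [Field F] [Fintype F] [Algebra (ZMod p) F]
    (hcard : Fintype.card F = p ^ f)
    (χ : MulChar F ℂ) (hχord : orderOf χ = l ^ r) :
    ∃ a b : ℤ,
      4 * (p : ℤ) ^ classNumSqrtNeg l = a ^ 2 + (l : ℤ) * b ^ 2 ∧
      a ≡ -2 * (p : ℤ) ^ ((l - 1 + 2 * classNumSqrtNeg l) / 4) [ZMOD (l : ℤ)] ∧
      ∀ t : ℕ, t < r →
        gaussSumN p χ (l ^ t) =
          (p : ℂ) ^ (((f : ℤ) - (classNumSqrtNeg l : ℤ) * (l : ℤ) ^ t) / 2) *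
            (((a : ℂ) + (b : ℂ) * sqrtNeg l) / 2) ^ (l ^ t) := by
  have : Fact p.Prime := ⟨hp⟩
  have : Fact l.Prime := ⟨hl⟩
  obtain ⟨hff, hφ, hodd⟩ := arith l hl hl4 r hr f hind
  have hpl1 := not_one_mod l hl hl4 hl7 r hr p f hp hf hff
  have hpow1 : χ ^ l ^ r = 1 := by rw [← hχord]; exact pow_orderOf_eq_one χ
  obtain ⟨V, hV⟩ := exists_val p hp
  obtain ⟨W, hW⟩ := exists_val l hl
  obtain ⟨c, d, hcd⟩ := vals hV hl4 hl7 χ r hr hχord f hpl hcard hf hφ hodd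
  obtain ⟨hhalf, hpf⟩ := p_pow_half l hl hl4 r hr p f hpl hf hff
  set G : ℕ → ℂ := fun t => gaussSum (χ ^ l ^ t) (psi p F) with hG
  have hGint : ∀ t, IsIntegral ℤ (G t) := fun t => gauss_int p _
  have hGmem : ∀ t, G t ∈ ℚ⟮sqrtNeg l⟯ := fun t => gauss_mem p l hl4 r hr f hpl hpl1 hf hφ hodd χ hpow1 _
  have hGW : ∀ t, W.valuation (G t + 1) < 1 := fun t => gauss_val_l hW χ r hpow1 _
  have hGn : ∀ t < r, G t * (starRingEnd ℂ) (G t) = (p : ℂ) ^ f := by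
    intro t ht
    have h1 : χ ^ l ^ t ≠ 1 := by
      intro h
      have := Nat.le_of_dvd (pow_pos hl.pos t) (orderOf_dvd_of_pow_eq_one h)
      rw [hχord] at this
      exact absurd this (not_le.2 (Nat.pow_lt_pow_right hl.one_lt ht))
    rw [hG, gauss_norm p _ h1, hcard]; push_cast; rfl
  set h := classNumSqrtNeg l with hh
  clear_value h
  have hp0 : (p : ℂ) ≠ 0 := by exact_mod_cast hp.ne_zero
  have hp0q : (p : ℚ) ≠ 0 := by exact_mod_cast hp.ne_zero
  have hVle : V.valuation (p : ℂ) ≤ 1 := hV.le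
  have hV0 : V.valuation (p : ℂ) ≠ 0 := val_p_ne hp
  -- t = 0
  obtain ⟨e, hfe, v1, v2⟩ := hcd 0 (by omega)
  rw [pow_zero, mul_one] at hfe v1 v2
  have hG0 : gaussSum (χ ^ 1) (psi p F) = G 0 := by simp [hG]
  rw [hG0] at v1 v2
  obtain ⟨u, v, huv⟩ := mem_form (G 0) (hGmem 0)
  obtain ⟨a, ha⟩ := trace_int hp hV l 0 e u v (by rw [pow_zero, one_mul, ← huv]; exact hGint 0)
    (by rw [← huv, v1, pow_add]; exact mul_le_of_le_one_right' (pow_le_one₀ zero_le hVle))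
    (by rw [← conj_form, ← huv, v2, pow_add]; exact mul_le_of_le_one_right' (pow_le_one₀ zero_le hVle))
  have hnorm : u ^ 2 + l * v ^ 2 = p ^ f := by
    have := hGn 0 (by omega)
    rw [huv, conj_form, form_norm] at this
    exact_mod_cast this
  have hab : (a : ℚ) ^ 2 + l * (2 * v / p ^ e) ^ 2 = 4 * p ^ h := by
    have h1 : (u : ℚ) = p ^ e * a / 2 := by linarith
    rw [h1, hfe, pow_add, pow_mul'] at hnorm
    field_simp at hnorm ⊢
    linear_combination hnorm
  obtain ⟨b, hb⟩ := lw_int (w := 2 * v / p ^ e) (n := 4 * p ^ h - a ^ 2) hl (by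
    push_cast; linear_combination hab)
  rw [hb] at hab
  have hvb : v = p ^ e * b / 2 := by rw [← hb]; field_simp
  have hub : u = p ^ e * a / 2 := by linarith
  set α : ℂ := ((a : ℂ) + (b : ℂ) * sqrtNeg l) / 2 with hα
  have hGα : G 0 = (p : ℂ) ^ e * α := by
    rw [huv, hvb, hub, hα]; push_cast; ring
  refine ⟨a, b, ?_, ?_, ?_⟩
  · have : ((4 * (p : ℤ) ^ h : ℤ) : ℚ) = ((a ^ 2 + (l : ℤ) * b ^ 2 : ℤ) : ℚ) := by
      push_cast; linarith
    exact_mod_cast this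
  · have hw : W.valuation (((p ^ e * a + 2 : ℤ)) : ℂ) < 1 := by
      have h1 : (((p ^ e * a + 2 : ℤ)) : ℂ) = (G 0 + 1) + ((starRingEnd ℂ) (G 0) + 1) := by
        rw [huv, conj_form, hub]; push_cast; ring
      rw [h1]
      refine (W.valuation.map_add_lt (hGW 0) ?_)
      rw [hG, gauss_conj p χ (l ^ r) (Odd.pow ⟨(l / 4) * 2 + 1, by omega⟩) hpow1]
      exact gauss_val_l hW χ r hpow1 _
    have hdvd : (l : ℤ) ∣ p ^ e * a + 2 := by
      by_contra hnd
      exact hw.ne (val_coprime hl hW hnd)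
    obtain ⟨E, hE⟩ : ∃ E, (l - 1 + 2 * h) / 4 = E := ⟨_, rfl⟩
    obtain ⟨s, hs⟩ : ∃ s, l ^ (r - 1) = 2 * s + 1 := by
      have : Odd (l ^ (r - 1)) := Odd.pow ⟨(l / 4) * 2 + 1, by omega⟩
      exact this
    obtain ⟨m, hm⟩ : ∃ m, l = 4 * m + 3 := ⟨l / 4, by omega⟩
    have hm2 : (l - 1) / 2 = 2 * m + 1 := by omega
    have hEE : e + E = (2 * m + 1) * (s + 1) := by
      obtain ⟨z, hz⟩ := hodd
      have h1 : 4 * E = l - 1 + 2 * h := by omega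
      have h2 : 4 * (e + E) = 2 * f + (l - 1) := by omega
      rw [hff, hs, hm2] at h2
      have h3 : l - 1 = 2 * (2 * m + 1) := by omega
      rw [h3] at h2
      nlinarith
    have hpE : (p : ZMod l) ^ (e + E) = 1 := by
      rw [hEE, pow_mul, ← hm2, hhalf, one_pow]
    rw [hE]
    have hd' := (ZMod.intCast_zmod_eq_zero_iff_dvd _ _).2 hdvd
    rw [← ZMod.intCast_eq_intCast_iff]
    push_cast at hd' ⊢
    rw [pow_add] at hpE
    linear_combination (-(a : ZMod l)) * hpE + (p : ZMod l) ^ E * hd'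
  · intro t ht
    obtain ⟨et, hfet, w1, w2⟩ := hcd t ht
    have hexp : ((f : ℤ) - (h : ℤ) * (l : ℤ) ^ t) / 2 = (et : ℤ) := by
      have : (f : ℤ) = 2 * et + h * l ^ t := by exact_mod_cast hfet
      rw [this]; omega
    rw [gaussSumN_eq, hexp, zpow_natCast]
    change G t = _
    have hαn : α * (starRingEnd ℂ) α = (p : ℂ) ^ h := by
      have h1 := hGn 0 (by omega)
      rw [hGα, map_mul, map_pow, map_natCast, hfe, pow_add, pow_mul'] at h1
      refine mul_left_cancel₀ (pow_ne_zero 2 (pow_ne_zero e hp0)) ?_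
      rw [← h1]; ring
    have hα0 : α ≠ 0 := by
      intro h0; rw [h0, zero_mul] at hαn; exact pow_ne_zero h hp0 hαn.symm
    have hα0' : (starRingEnd ℂ) α ≠ 0 := by
      intro h0; rw [h0, mul_zero] at hαn; exact pow_ne_zero h hp0 hαn.symm
    have hvα : V.valuation α = V.valuation (p : ℂ) ^ (c * h) := by
      rw [hGα, map_mul, map_pow, pow_add] at v1
      exact mul_left_cancel₀ (pow_ne_zero e hV0) v1
    have hvα' : V.valuation ((starRingEnd ℂ) α) = V.valuation (p : ℂ) ^ (d * h) := by
      rw [hGα, map_mul, map_pow, map_natCast, map_mul, map_pow, pow_add] at v2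
      exact mul_left_cancel₀ (pow_ne_zero e hV0) v2
    set D : ℂ := (p : ℂ) ^ et * α ^ l ^ t with hD
    have hD0 : D ≠ 0 := mul_ne_zero (pow_ne_zero _ hp0) (pow_ne_zero _ hα0)
    have hDc : (starRingEnd ℂ) D = (p : ℂ) ^ et * ((starRingEnd ℂ) α) ^ l ^ t := by
      rw [hD, map_mul, map_pow, map_natCast, map_pow]
    have hDc0 : (starRingEnd ℂ) D ≠ 0 := by
      rw [hDc]; exact mul_ne_zero (pow_ne_zero _ hp0) (pow_ne_zero _ hα0')
    have hDn : D * (starRingEnd ℂ) D = (p : ℂ) ^ f := by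
      rw [hDc, hD, hfet, pow_add, pow_mul', pow_mul, ← hαn, mul_pow]; ring
    have hVD : V.valuation D = V.valuation (G t) := by
      rw [w1, hD, map_mul, map_pow, map_pow, hvα, ← pow_mul, ← pow_add]; congr 1; ring
    have hVDc : V.valuation ((starRingEnd ℂ) D) = V.valuation ((starRingEnd ℂ) (G t)) := by
      rw [w2, hDc, map_mul, map_pow, map_pow, hvα', ← pow_mul, ← pow_add]; congr 1; ring
    have hαmem : α ∈ ℚ⟮sqrtNeg l⟯ := by
      have : α = ((p : ℂ) ^ e)⁻¹ * G 0 := by rw [hGα]; field_simp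
      rw [this]
      exact mul_mem (inv_mem (pow_mem (_root_.natCast_mem _ _) _)) (hGmem 0)
    have hβ := unit_pm hp hV l hl hl7 (G t / D)
      (div_mem (hGmem t) (mul_mem (pow_mem (_root_.natCast_mem _ _) _) (pow_mem hαmem _)))
      (by
        rw [map_div₀, div_mul_div_comm, hGn t ht, hDn]
        exact div_self (pow_ne_zero _ hp0))
      (f + e * l ^ t) (by
        have h1 : (p : ℂ) ^ (f + e * l ^ t) * (G t / D) =
            G t * ((p : ℂ) ^ et * ((starRingEnd ℂ) (G 0)) ^ l ^ t) := by
          rw [pow_add, ← hDn, hDc, hGα, map_mul, map_pow, map_natCast, mul_pow, ← pow_mul]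
          field_simp
        rw [h1]
        have hpi : IsIntegral ℤ (p : ℂ) := by
          simpa using (isIntegral_algebraMap (R := ℤ) (A := ℂ) (x := (p : ℤ)))
        exact (hGint t).mul ((hpi.pow _).mul ((conj_int (hGint 0)).pow _)))
      (by
        rw [map_div₀, hVD, div_self]
        rw [← hVD]; simpa using hD0)
      (by
        rw [map_div₀, map_div₀, hVDc, div_self]
        rw [← hVDc]; simpa using hD0)
    rcases hβ with hβ | hβ
    · rw [div_eq_one_iff_eq hD0] at hβ
      exact hβ
    · exfalso
      rw [div_eq_iff hD0] at hβ
      obtain ⟨s, hs⟩ : ∃ s, l ^ t = 2 * s + 1 := by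
        have : Odd (l ^ t) := Odd.pow ⟨(l / 4) * 2 + 1, by omega⟩
        exact this
      refine sign_contra hl hl4 p (G 0) (G t) (hGint 0) (hGint t) W hW (hGW 0) (hGW t) (f * s) t
        (by rw [pow_mul, hpf, one_pow]) ?_
      rw [hβ, hD, hGα, mul_pow, ← pow_mul]
      have h1 : e * l ^ t = et + f * s := by
        have h2 : 2 * (e * l ^ t) = 2 * (et + f * s) := by
          have h3 : f * l ^ t = 2 * (f * s) + f := by rw [hs]; ring
          have h5 : f * l ^ t = 2 * (e * l ^ t) + h * l ^ t := by
            calc f * l ^ t = (2 * e + h) * l ^ t := by rw [← hfe]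
              _ = _ := by ring
          omega
        omega
      rw [h1, pow_add]; ring
end G16

theorem statement16 (p l r N f : ℕ) (hp : p.Prime) (hl : l.Prime) (hl4 : l % 4 = 3)
    (hl7 : 7 ≤ l) (hr : 1 ≤ r) (hN : N = l ^ r) (hNp : Nat.gcd N p = 1)
    (hf : orderOf (p : ZMod N) = f) (hind : f = Nat.totient N / 2)
    (F : Type) [Field F] [Fintype F] [Algebra (ZMod p) F]
    (hcard : Fintype.card F = p ^ f)
    (χ : MulChar F ℂ) (hχord : orderOf χ = N) :
    ∃ a b : ℤ,
      4 * (p : ℤ) ^ classNumSqrtNeg l = a ^ 2 + (l : ℤ) * b ^ 2 ∧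
      a ≡ -2 * (p : ℤ) ^ ((l - 1 + 2 * classNumSqrtNeg l) / 4) [ZMOD (l : ℤ)] ∧
      ∀ t : ℕ, t < r →
        gaussSumN p χ (l ^ t) =
          (p : ℂ) ^ (((f : ℤ) - (classNumSqrtNeg l : ℤ) * (l : ℤ) ^ t) / 2) *
            (((a : ℂ) + (b : ℂ) * sqrtNeg l) / 2) ^ (l ^ t) := by
  subst hN
  have hpl : ¬ l ∣ p := by
    intro hd
    have h1 := Nat.dvd_gcd (dvd_pow_self l (by omega : r ≠ 0)) hd
    rw [hNp] at h1
    exact hl.one_lt.ne' (Nat.dvd_one.1 h1)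
  exact G16.main p l r f hp hl hl4 hl7 hr hpl hf hind F hcard χ hχord
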